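/- Let Σ_A(ℕ) be a topologically mixing, finitely primitive (BIP) countable Markov shift, f : Σ_A(ℕ) → ℝ satisfying the Walters condition with Var_1 f < ∞ and P(f) < ∞, admitting a unique maximizing measure, and for β > 1 let μ_β be the Gibbs measure of βf. Suppose β_i → ∞ is a sequence such that for every cylinder C the limit lim_{β_i→∞} (1/β_i) log μ_{β_i}(C) exists. Then: (1) the function Ĩ(x) := −lim_{n→∞} lim_{β_i→∞} (1/β_i) log μ_{β_i}([x_0 … x_n]) is well defined, nonnegative and lower semi-continuous; (2) for every cylinder C, lim_{β_i→∞} (1/β_i) log μ_{β_i}(C) = −inf_{x∈C} Ĩ(x); (3) Ĩ(x) ≥ Ĩ(σ(x)) for all x, and in particular the limit Ĩ_0(x) := lim_{n→∞} Ĩ(σ^n(x)) exists. -/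

import Mathlib

open Filter Topology MeasureTheory
open scoped ENNReal

/-- The countable Markov shift over alphabet ℕ determined by the 0-1 matrix `A`. -/
def MarkovShift (A : ℕ → ℕ → Bool) : Type :=
  {x : ℕ → ℕ // ∀ i, A (x i) (x (i + 1)) = true}

namespace MarkovShift

variable {A : ℕ → ℕ → Bool}

instance : TopologicalSpace (MarkovShift A) :=
  instTopologicalSpaceSubtype

instance : MeasurableSpace (MarkovShift A) := borel _

instance : BorelSpace (MarkovShift A) := ⟨rfl⟩

/-- The shift map. -/
def shift (x : MarkovShift A) : MarkovShift A :=
  ⟨fun n => x.1 (n + 1), fun i => x.2 (i + 1)⟩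

/-- The cylinder set determined by a finite word. -/
def cylinder (w : List ℕ) : Set (MarkovShift A) :=
  {x | ∀ i : Fin w.length, x.1 i = w.get i}

/-- The cylinder set determined by the first `m` coordinates of `x`. -/
def cylOf (x : MarkovShift A) (m : ℕ) : Set (MarkovShift A) :=
  {y | ∀ i < m, y.1 i = x.1 i}

/-- A symbol is admissible when its cylinder is nonempty. -/
def Admissible (A : ℕ → ℕ → Bool) (a : ℕ) : Prop :=
  ∃ x : MarkovShift A, x.1 0 = a

/-- Topologically mixing. -/
def TopologicallyMixing (A : ℕ → ℕ → Bool) : Prop :=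
  ∀ a b : ℕ, Admissible A a → Admissible A b →
    ∃ N : ℕ, ∀ n ≥ N, ∃ x : MarkovShift A, x.1 0 = a ∧ (shift^[n] x).1 0 = b

/-- Finitely primitive (BIP). -/
def FinitelyPrimitive (A : ℕ → ℕ → Bool) : Prop :=
  ∃ (K₀ : ℕ) (F : Finset ℕ), ∀ a b : ℕ, Admissible A a → Admissible A b →
    ∃ w : List ℕ, w.length = K₀ ∧ (∀ c ∈ w, c ∈ F) ∧
      List.Chain' (fun u v => A u v = true) (a :: (w ++ [b]))

/-- First coordinate where two distinct points disagree. -/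
noncomputable def firstDiff (x y : MarkovShift A) (h : x ≠ y) : ℕ :=
  Nat.find (Function.ne_iff.mp (fun hxy : x.1 = y.1 => h (Subtype.ext hxy)))

open Classical in
/-- The metric `d(x,y) = r^{t(x,y)}`. -/
noncomputable def dist' (r : ℝ) (x y : MarkovShift A) : ℝ :=
  if h : x = y then 0 else r ^ firstDiff x y h

/-- Birkhoff sum `S_n f`. -/
def birkhoff (f : MarkovShift A → ℝ) (n : ℕ) (x : MarkovShift A) : ℝ :=
  ∑ j ∈ Finset.range n, f (shift^[j] x)

/-- The set of values `|S_n f x - S_n f y|` over pairs agreeing on the first `m` coordinates. -/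
def varSet (f : MarkovShift A → ℝ) (n m : ℕ) : Set ℝ :=
  {c | ∃ x y : MarkovShift A, (∀ i < m, x.1 i = y.1 i) ∧ c = |birkhoff f n x - birkhoff f n y|}

/-- `Var_m (S_n f)`. -/
noncomputable def varBirk (f : MarkovShift A → ℝ) (n m : ℕ) : ℝ := sSup (varSet f n m)

/-- `Var_1 f < ∞`. -/
def Var1Finite (f : MarkovShift A → ℝ) : Prop := BddAbove (varSet f 1 1)

/-- The set whose supremum is `sup_{n ≥ 1} Var_{n+k}(S_n f)`. -/
def waltersSet (f : MarkovShift A → ℝ) (k : ℕ) : Set ℝ :=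
  {c | ∃ n, 1 ≤ n ∧ c ∈ varSet f n (n + k)}

/-- `M_k = sup_{n ≥ 1} Var_{n+k}(S_n f)`. -/
noncomputable def waltersSup (f : MarkovShift A → ℝ) (k : ℕ) : ℝ := sSup (waltersSet f k)

/-- The Walters condition. -/
def SatisfiesWalters (f : MarkovShift A → ℝ) : Prop :=
  (∀ k, 1 ≤ k → BddAbove (waltersSet f k)) ∧
    Tendsto (fun k => waltersSup f k) atTop (𝓝 0)

/-- The partition function `Z_n(f,a) = Σ_{σ^n x = x, x₀ = a} e^{S_n f (x)}`. -/
noncomputable def partitionSum (f : MarkovShift A → ℝ) (n : ℕ) (a : ℕ) : ℝ :=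
  ∑' x : {x : MarkovShift A // shift^[n] x = x ∧ x.1 0 = a}, Real.exp (birkhoff f n x.1)

/-- `f` has (finite) Gurevich pressure `p`. -/
def HasGurevichPressure (f : MarkovShift A → ℝ) (p : ℝ) : Prop :=
  ∀ a : ℕ, Admissible A a →
    (∀ n, 1 ≤ n → Summable fun x : {x : MarkovShift A // shift^[n] x = x ∧ x.1 0 = a} =>
        Real.exp (birkhoff f n x.1)) ∧
    Tendsto (fun n : ℕ => (1 / (n : ℝ)) * Real.log (partitionSum f n a)) atTop (𝓝 p)

/-- σ-invariant Borel probability measure. -/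
def IsInvariantProb (μ : Measure (MarkovShift A)) : Prop :=
  IsProbabilityMeasure μ ∧ μ.map shift = μ

/-- `m(f)`, the maximal ergodic average. -/
noncomputable def mf (f : MarkovShift A → ℝ) : ℝ :=
  sSup {c | ∃ μ : Measure (MarkovShift A),
    IsInvariantProb μ ∧ Integrable f μ ∧ ∫ x, f x ∂μ = c}

/-- A maximizing measure for `f`. -/
def IsMaximizing (f : MarkovShift A → ℝ) (μ : Measure (MarkovShift A)) : Prop :=
  IsInvariantProb μ ∧ Integrable f μ ∧ ∫ x, f x ∂μ = mf f

/-- Bounded real valued function. -/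
def BoundedFun (g : MarkovShift A → ℝ) : Prop := ∃ C, ∀ x, |g x| ≤ C

/-- A bounded calibrated sub-action for `f`. -/
def IsCalibratedSubaction (f V : MarkovShift A → ℝ) : Prop :=
  Continuous V ∧ BoundedFun V ∧
    (∀ x, f x + V x - V (shift x) - mf f ≤ 0) ∧
    (∀ y, ∃ x, shift x = y ∧ f x + V x - V (shift x) - mf f = 0)

/-- The Ruelle transfer operator `(L_g u)(x) = Σ_{σ y = x} e^{g(y)} u(y)`. -/
noncomputable def ruelle (g u : MarkovShift A → ℝ) (x : MarkovShift A) : ℝ :=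
  ∑' y : {y : MarkovShift A // shift y = x}, Real.exp (g y.1) * u y.1

/-- Ruelle-Perron-Frobenius data for the potential `f` with pressure `p`:
eigenfunction `h`, eigenmeasure `ν`. -/
def IsRPF (f : MarkovShift A → ℝ) (p : ℝ) (h : MarkovShift A → ℝ)
    (ν : Measure (MarkovShift A)) : Prop :=
  Continuous h ∧ (∀ x, 0 < h x) ∧
    (∀ x, ruelle f h x = Real.exp p * h x) ∧
    IsProbabilityMeasure ν ∧
    (∀ g : MarkovShift A → ℝ, Continuous g → BoundedFun g →
      ∫ x, ruelle f g x ∂ν = Real.exp p * ∫ x, g x ∂ν) ∧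
    ∫ x, h x ∂ν = 1

/-- The Gibbs measure `dμ = h dν`. -/
noncomputable def gibbs (h : MarkovShift A → ℝ) (ν : Measure (MarkovShift A)) :
    Measure (MarkovShift A) :=
  ν.withDensity fun x => ENNReal.ofReal (h x)

/-- The Mañé potential `S_f(x,y)` (with respect to the metric of parameter `r`). -/
noncomputable def manePot (r : ℝ) (f : MarkovShift A → ℝ) (x y : MarkovShift A) : EReal :=
  ⨅ ε : {ε : ℝ // 0 < ε}, ⨆ n : {n : ℕ // 1 ≤ n},
    ⨆ _z : {z : MarkovShift A // dist' r x z < ε.1 ∧ shift^[n.1] z = y},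
      ((birkhoff (fun w => f w - mf f) n.1 _z.1 : ℝ) : EReal)

/-- The (topological) support of a measure. -/
def msupport (μ : Measure (MarkovShift A)) : Set (MarkovShift A) :=
  {x | ∀ U : Set (MarkovShift A), IsOpen U → x ∈ U → 0 < μ U}

end MarkovShift

namespace MarkovShift

/-! The Gibbs measure `h ν` of `g = β f` is invariant and has a density with respect to the
eigenmeasure `ν`. Under `ν`, a cylinder and the preimage of any event past it are independent up
to a constant, and averaging this against the density gives `h ν ≤ c ν`, where `c` depends on `h`
only through `g` and the eigenvalue. All constants involved are at most `β`-th powers of constants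
for one fixed temperature, because `∑ₐ sₐ ^ β ≤ (∑ₐ sₐ) ^ β` for `β ≥ 1`: the Gibbs measures are
exponentially tight on the scale `β`.

Hence, among the one-symbol extensions of a cylinder, finitely many carry its mass up to an
exponentially negligible error, so that one of them has the same exponential rate. Iterating, every
cylinder contains a point along which the rate never drops. The deviation function attains its
infimum there, and this is the only place where something could escape to infinity: everything else
follows from the monotonicity and the shift invariance of the measures. -/

section Development

variable {A : ℕ → ℕ → Bool}

/-- The exponential of a real number as an extended nonnegative real: `EReal.exp` restricted to
`ℝ`, so that sums of weights never have to be tested for summability. -/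
noncomputable def eexp (t : ℝ) : ℝ≥0∞ := EReal.exp t

theorem eexp_eq_ofReal (t : ℝ) : eexp t = ENNReal.ofReal (Real.exp t) := EReal.exp_coe t

theorem eexp_add (s t : ℝ) : eexp (s + t) = eexp s * eexp t := EReal.exp_add s t

theorem eexp_zero : eexp 0 = 1 := EReal.exp_zero

theorem eexp_ne_zero (t : ℝ) : eexp t ≠ 0 := (EReal.zero_lt_exp_iff.2 (EReal.bot_lt_coe t)).ne'

theorem eexp_ne_top (t : ℝ) : eexp t ≠ ∞ := ENNReal.ofReal_ne_top

theorem eexp_mono : Monotone eexp := fun _ _ h => EReal.exp_monotone (EReal.coe_le_coe_iff.2 h)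

theorem eexp_mul (s t : ℝ) : eexp (s * t) = eexp t ^ s := by
  rw [mul_comm, eexp, EReal.coe_mul, EReal.exp_mul, eexp]

theorem eexp_nat_mul (n : ℕ) (t : ℝ) : eexp (n * t) = eexp t ^ n := by
  rw [eexp_mul, ENNReal.rpow_natCast]

theorem continuous_eexp : Continuous eexp :=
  EReal.expHomeomorph.continuous.comp continuous_coe_real_ereal

/-! ### The shift space -/

instance : TopologicalSpace.MetrizableSpace (MarkovShift A) :=
  have : TopologicalSpace.MetrizableSpace (ℕ → ℕ) :=
    TopologicalSpace.metrizableSpace_of_t3_secondCountable _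
  (Topology.IsEmbedding.subtypeVal
    (p := fun x : ℕ → ℕ => ∀ i, A (x i) (x (i + 1)) = true)).metrizableSpace

theorem continuous_coord (n : ℕ) : Continuous fun x : MarkovShift A => x.1 n :=
  (continuous_apply n).comp continuous_subtype_val

theorem continuous_of_continuous_coord {X : Type*} [TopologicalSpace X] {g : X → MarkovShift A}
    (hg : ∀ n, Continuous fun x => (g x).1 n) : Continuous g :=
  continuous_induced_rng.2 (continuous_pi hg)

theorem continuous_shift : Continuous (shift : MarkovShift A → MarkovShift A) :=
  continuous_of_continuous_coord fun n => continuous_coord (n + 1)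

theorem isClopen_coord_mem (n : ℕ) (S : Set ℕ) : IsClopen {x : MarkovShift A | x.1 n ∈ S} :=
  (isClopen_discrete S).preimage (continuous_coord n)

theorem shift_iterate_coord (n : ℕ) (x : MarkovShift A) (i : ℕ) :
    (shift^[n] x).1 i = x.1 (n + i) := by
  induction n generalizing x with
  | zero => rw [Function.iterate_zero_apply, zero_add]
  | succ n ih =>
    rw [Function.iterate_succ_apply, ih, Nat.add_right_comm]
    rfl

theorem ext_shift {x y : MarkovShift A} (h0 : x.1 0 = y.1 0) (hs : shift x = shift y) :
    x = y := by
  refine Subtype.ext (funext fun n => ?_)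
  cases n with
  | zero => exact h0
  | succ n => exact congrFun (congrArg Subtype.val hs) n

theorem ext_shift_iterate {n : ℕ} {x y : MarkovShift A} (h : y ∈ cylOf x n)
    (hs : shift^[n] x = shift^[n] y) : x = y := by
  refine Subtype.ext (funext fun i => ?_)
  rcases lt_or_ge i n with hi | hi
  · exact (h i hi).symm
  · obtain ⟨j, rfl⟩ := Nat.exists_eq_add_of_le hi
    rw [← shift_iterate_coord, hs, shift_iterate_coord]

theorem mem_cylOf_self (x : MarkovShift A) (n : ℕ) : x ∈ cylOf x n := fun _ _ => rfl

theorem cylOf_antitone (x : MarkovShift A) : Antitone (cylOf x) :=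
  fun _ _ hmn _ hy i hi => hy i (hi.trans_le hmn)

theorem cylOf_eq_of_mem {x y : MarkovShift A} {n : ℕ} (h : y ∈ cylOf x n) :
    cylOf y n = cylOf x n :=
  Set.ext fun _ => forall₂_congr fun i hi => by rw [h i hi]

theorem isClopen_cylOf (x : MarkovShift A) (n : ℕ) : IsClopen (cylOf x n) := by
  have : cylOf x n = ⋂ i ∈ Finset.range n, {y : MarkovShift A | y.1 i ∈ ({x.1 i} : Set ℕ)} := by
    ext y
    simp [cylOf]
  rw [this]
  exact isClopen_biInter_finset fun i _ => isClopen_coord_mem i _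

theorem hasBasis_nhds_cylOf (x : MarkovShift A) :
    (𝓝 x).HasBasis (fun _ => True) (cylOf x) := by
  refine ⟨fun U => ⟨fun hU => ?_, fun ⟨n, _, hn⟩ =>
    mem_of_superset ((isClopen_cylOf x n).isOpen.mem_nhds (mem_cylOf_self x n)) hn⟩⟩
  obtain ⟨V, hV, hVU⟩ := mem_nhds_subtype _ x U |>.1 hU
  obtain ⟨_, ⟨z, n, rfl⟩, hxz, hzV⟩ :=
    (PiNat.isTopologicalBasis_cylinders fun _ : ℕ => ℕ).mem_nhds_iff.1 hV
  exact ⟨n, trivial, fun y hy => hVU (hzV fun i hi => (hy i hi).trans (hxz i hi))⟩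

/-- The word `x₀ ⋯ x_{n-1}` of the first `n` symbols of `x`. -/
def word (x : MarkovShift A) (n : ℕ) : List ℕ := List.ofFn fun i : Fin n => x.1 i

theorem word_length_of_mem_cylinder {w : List ℕ} {x : MarkovShift A} (h : x ∈ cylinder w) :
    word x w.length = w := by
  rw [word, funext h]
  exact List.ofFn_get w

theorem cylinder_eq_cylOf {w : List ℕ} {x : MarkovShift A} (h : x ∈ cylinder w) :
    cylinder w = cylOf x w.length :=
  Set.ext fun _ => Fin.forall_iff.trans (forall₂_congr fun i hi => by rw [h ⟨i, hi⟩])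

theorem cylinder_word (x : MarkovShift A) (n : ℕ) : cylinder (word x n) = cylOf x n := by
  have hx : x ∈ cylinder (word x n) := fun i => (List.get_ofFn _ i).symm
  rw [cylinder_eq_cylOf hx, word, List.length_ofFn]

theorem word_eq_of_mem_cylOf {x y : MarkovShift A} {n : ℕ} (h : y ∈ cylOf x n) :
    word y n = word x n :=
  congrArg List.ofFn (funext fun i => h i i.2)

theorem exists_forall_mem_cylOf {y : ℕ → MarkovShift A} {k : ℕ}
    (hy : ∀ j, y (j + 1) ∈ cylOf (y j) (k + j)) :
    ∃ x, ∀ j, x ∈ cylOf (y j) (k + j) := by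
  have hmem {j j' : ℕ} (hj : j ≤ j') : y j' ∈ cylOf (y j) (k + j) := by
    induction j', hj using Nat.le_induction with
    | base => exact mem_cylOf_self _ _
    | succ j' hj ih => exact fun i hi => (hy j' i (by lia)).trans (ih i hi)
  have hdiag {i j : ℕ} (hi : i < k + j) : (y (i + 1)).1 i = (y j).1 i := by
    rcases le_total j (i + 1) with hj | hj
    · exact hmem hj i hi
    · exact (hmem hj i (by lia)).symm
  refine ⟨⟨fun i => (y (i + 1)).1 i, fun i => ?_⟩, fun j i hi => hdiag hi⟩
  have h : (y (i + 1)).1 i = (y (i + 2)).1 i := hdiag (by lia)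
  exact (congrArg (A · _) h).trans ((y (i + 2)).2 i)

/-- The points whose first symbol is `a`. -/
def symCyl (A : ℕ → ℕ → Bool) (a : ℕ) : Set (MarkovShift A) := {x | x.1 0 = a}

/-- The points to which the symbol `a` can be prepended. -/
def followers (A : ℕ → ℕ → Bool) (a : ℕ) : Set (MarkovShift A) := {x | A a (x.1 0) = true}

theorem isClopen_symCyl (a : ℕ) : IsClopen (symCyl A a) := isClopen_coord_mem 0 {a}

theorem isClopen_followers (a : ℕ) : IsClopen (followers A a) :=
  isClopen_coord_mem 0 {b | A a b = true}

theorem shift_mem_followers (x : MarkovShift A) : shift x ∈ followers A (x.1 0) := x.2 0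

theorem cylOf_one (x : MarkovShift A) : cylOf x 1 = symCyl A (x.1 0) :=
  Set.ext fun _ => ⟨fun h => h 0 one_pos, fun h _ hi => Nat.lt_one_iff.1 hi ▸ h⟩

/-- Prepend the symbol `a` to `x`; the value is `x` itself when `a` cannot precede `x₀`. -/
def cons (a : ℕ) (x : MarkovShift A) : MarkovShift A :=
  if hA : A a (x.1 0) = true then
    ⟨fun n => Nat.casesOn n a x.1, fun i => Nat.casesOn i hA x.2⟩
  else x

theorem cons_of_mem {a : ℕ} {x : MarkovShift A} (hx : x ∈ followers A a) :
    cons a x = ⟨fun n => Nat.casesOn n a x.1, fun i => Nat.casesOn i hx x.2⟩ :=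
  dif_pos hx

theorem cons_zero {a : ℕ} {x : MarkovShift A} (hx : x ∈ followers A a) : (cons a x).1 0 = a := by
  rw [cons_of_mem hx]
  rfl

theorem shift_cons {a : ℕ} {x : MarkovShift A} (hx : x ∈ followers A a) :
    shift (cons a x) = x := by
  rw [cons_of_mem hx]
  rfl

theorem cons_succ {a : ℕ} {x : MarkovShift A} (hx : x ∈ followers A a) (n : ℕ) :
    (cons a x).1 (n + 1) = x.1 n :=
  congrFun (congrArg Subtype.val (shift_cons hx)) n

theorem cons_shift (x : MarkovShift A) : cons (x.1 0) (shift x) = x :=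
  ext_shift (cons_zero (shift_mem_followers x)) (shift_cons (shift_mem_followers x))

theorem continuous_cons (a : ℕ) : Continuous (cons a : MarkovShift A → MarkovShift A) := by
  refine continuous_of_continuous_coord fun n => ?_
  have : (fun x : MarkovShift A => (cons a x).1 n) =
      (fun p : ℕ × ℕ × ℕ => if A a p.1 = true then (if n = 0 then a else p.2.1) else p.2.2) ∘
        fun x : MarkovShift A => (x.1 0, x.1 (n - 1), x.1 n) := by
    funext x
    by_cases hA : A a (x.1 0) = true
    · cases n <;> simp [cons, hA]
    · simp [cons, hA]
  rw [this]
  exact continuous_of_discreteTopology.comp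
    ((continuous_coord 0).prodMk ((continuous_coord _).prodMk (continuous_coord _)))

theorem exists_mem_cylOf_shift_iterate_eq (y : MarkovShift A) (n : ℕ) {x : MarkovShift A}
    (hx : x ∈ followers A (y.1 n)) : ∃ z ∈ cylOf y (n + 1), shift^[n + 1] z = x := by
  induction n generalizing y with
  | zero => exact ⟨cons (y.1 0) x, (cylOf_one y).symm ▸ cons_zero hx, shift_cons hx⟩
  | succ n ih =>
    obtain ⟨z, hz, hzx⟩ := ih (shift y) hx
    have hzy : z ∈ followers A (y.1 0) :=
      (congrArg (A (y.1 0)) (hz 0 n.succ_pos)).trans (shift_mem_followers y)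
    refine ⟨cons (y.1 0) z, fun i hi => ?_, ?_⟩
    · cases i with
      | zero => exact cons_zero hzy
      | succ i => exact (cons_succ hzy i).trans (hz i (Nat.lt_of_succ_lt_succ hi))
    · rw [Function.iterate_succ_apply, shift_cons hzy, hzx]

/-! ### Distortion of Birkhoff sums -/

theorem birkhoff_one (f : MarkovShift A → ℝ) (x : MarkovShift A) : birkhoff f 1 x = f x :=
  Finset.sum_range_one _

theorem birkhoff_succ (f : MarkovShift A → ℝ) (n : ℕ) (x : MarkovShift A) :
    birkhoff f (n + 1) x = birkhoff f n x + f (shift^[n] x) :=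
  Finset.sum_range_succ _ n

theorem birkhoff_succ' (f : MarkovShift A → ℝ) (n : ℕ) (x : MarkovShift A) :
    birkhoff f (n + 1) x = birkhoff f n (shift x) + f x :=
  Finset.sum_range_succ' _ n

theorem birkhoff_const_mul (β : ℝ) (f : MarkovShift A → ℝ) (n : ℕ) (x : MarkovShift A) :
    birkhoff (fun y => β * f y) n x = β * birkhoff f n x :=
  (Finset.mul_sum _ _ _).symm

theorem SatisfiesWalters.continuous {f : MarkovShift A → ℝ} (hf : SatisfiesWalters f) :
    Continuous f := by
  refine continuous_iff_continuousAt.2 fun x => Metric.tendsto_nhds.2 fun ε hε => ?_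
  obtain ⟨k, hkε, hk⟩ := ((hf.2.eventually (gt_mem_nhds hε)).and (eventually_ge_atTop 1)).exists
  filter_upwards [(isClopen_cylOf x (1 + k)).isOpen.mem_nhds (mem_cylOf_self x _)] with y hy
  refine (le_csSup (hf.1 k hk) ⟨1, le_rfl, y, x, hy, ?_⟩).trans_lt hkε
  rw [birkhoff_one, birkhoff_one, Real.dist_eq]

/-- The Birkhoff sums of `g` over `n` steps vary by at most `D` on every `n`-cylinder. -/
def HasDistortionBound (g : MarkovShift A → ℝ) (D : ℝ) : Prop :=
  ∀ n x, ∀ y ∈ cylOf x n, |birkhoff g n y - birkhoff g n x| ≤ D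

/-- The Walters condition controls the first `n - 1` terms of the Birkhoff sum, the bound on the
first variation controls the last one. -/
theorem SatisfiesWalters.exists_hasDistortionBound {f : MarkovShift A → ℝ}
    (hf : SatisfiesWalters f) (hVar1 : Var1Finite f) : ∃ D, HasDistortionBound f D := by
  obtain ⟨V, hV⟩ := hVar1
  obtain ⟨W, hW⟩ := hf.1 1 le_rfl
  refine ⟨max W 0 + max V 0, fun n x y hy => ?_⟩
  rcases n with _ | n
  · simp only [birkhoff, Finset.range_zero, Finset.sum_empty, sub_self, abs_zero]
    positivity
  have hinit : |birkhoff f n y - birkhoff f n x| ≤ max W 0 := by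
    rcases n.eq_zero_or_pos with rfl | hn
    · simp [birkhoff]
    · exact (hW ⟨n, hn, y, x, hy, rfl⟩).trans (le_max_left _ _)
  have hlast : |f (shift^[n] y) - f (shift^[n] x)| ≤ max V 0 := by
    refine (hV ⟨shift^[n] y, shift^[n] x, fun i hi => ?_, ?_⟩).trans (le_max_left _ _)
    · rw [shift_iterate_coord, shift_iterate_coord, hy _ (by lia)]
    · rw [birkhoff_one, birkhoff_one]
  rw [birkhoff_succ, birkhoff_succ, add_sub_add_comm]
  exact (abs_add_le _ _).trans (add_le_add hinit hlast)

namespace HasDistortionBound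

variable {g : MarkovShift A → ℝ} {D : ℝ}

theorem const_mul (hg : HasDistortionBound g D) (β : ℝ) :
    HasDistortionBound (fun x => β * g x) (|β| * D) := fun n x y hy => by
  rw [birkhoff_const_mul, birkhoff_const_mul, ← mul_sub, abs_mul]
  exact mul_le_mul_of_nonneg_left (hg n x y hy) (abs_nonneg β)

theorem birkhoff_le (hg : HasDistortionBound g D) {n : ℕ} {x y : MarkovShift A}
    (hy : y ∈ cylOf x n) : birkhoff g n y ≤ birkhoff g n x + D := by
  linarith [(abs_le.1 (hg n x y hy)).2]

theorem le_birkhoff (hg : HasDistortionBound g D) {n : ℕ} {x y : MarkovShift A}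
    (hy : y ∈ cylOf x n) : birkhoff g n x - D ≤ birkhoff g n y := by
  linarith [(abs_le.1 (hg n x y hy)).1]

theorem le_add (hg : HasDistortionBound g D) {a : ℕ} {x y : MarkovShift A}
    (hx : x ∈ symCyl A a) (hy : y ∈ symCyl A a) : g y ≤ g x + D := by
  have hyx : y ∈ cylOf x 1 := by rwa [cylOf_one, show x.1 0 = a from hx]
  simpa only [birkhoff_one] using hg.birkhoff_le hyx

theorem exists_le_on_symCyl (hg : HasDistortionBound g D) (a : ℕ) :
    ∃ C, ∀ x ∈ symCyl A a, g x ≤ C := by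
  rcases (symCyl A a).eq_empty_or_nonempty with h | ⟨x, hx⟩
  · exact ⟨0, by simp [h]⟩
  · exact ⟨g x + D, fun y hy => hg.le_add hx hy⟩

theorem exists_neg_le_on_finset (hg : HasDistortionBound g D) (F : Finset ℕ) :
    ∃ C, ∀ x : MarkovShift A, x.1 0 ∈ F → -C ≤ g x := by
  have hsymbol (a : ℕ) : ∃ C, ∀ x ∈ symCyl A a, -C ≤ g x := by
    rcases (symCyl A a).eq_empty_or_nonempty with h | ⟨x, hx⟩
    · exact ⟨0, by simp [h]⟩
    · exact ⟨D - g x, fun y hy => by linarith [hg.le_add hy hx]⟩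
  choose C hC using hsymbol
  obtain ⟨M, hM⟩ := (F.image C).exists_le
  refine ⟨M, fun x hx => (neg_le_neg (hM _ (Finset.mem_image_of_mem C hx))).trans (hC _ x rfl)⟩

end HasDistortionBound

/-! ### The transfer operator -/

theorem tsum_shift_fiber {M : Type*} [AddCommMonoid M] [TopologicalSpace M]
    (G : MarkovShift A → M) (x : MarkovShift A) :
    ∑' y : {y : MarkovShift A // shift y = x}, G y =
      ∑' a, (followers A a).indicator (fun x => G (cons a x)) x := by
  have hinj : Function.Injective fun y : {y : MarkovShift A // shift y = x} => y.1.1 0 :=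
    fun y z h => Subtype.ext (ext_shift h (y.2.trans z.2.symm))
  rw [← hinj.tsum_eq]
  · refine tsum_congr fun ⟨y, hy⟩ => ?_
    subst hy
    rw [Set.indicator_of_mem (shift_mem_followers y), cons_shift]
  · intro a ha
    have hx : x ∈ followers A a := Set.mem_of_indicator_ne_zero ha
    exact ⟨⟨cons a x, shift_cons hx⟩, cons_zero hx⟩

/-- The `n`-th iterate `Σ_{σⁿ y = x} e^{S_n g(y)} u(y)` of the transfer operator of `g`, acting on
functions with values in `[0, ∞]`. -/
noncomputable def transfer (g : MarkovShift A → ℝ) (n : ℕ) (u : MarkovShift A → ℝ≥0∞)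
    (x : MarkovShift A) : ℝ≥0∞ :=
  ∑' y : {y : MarkovShift A // shift^[n] y = x}, eexp (birkhoff g n y) * u y

theorem le_transfer (g : MarkovShift A → ℝ) (n : ℕ) (u : MarkovShift A → ℝ≥0∞)
    (y : MarkovShift A) :
    eexp (birkhoff g n y) * u y ≤ transfer g n u (shift^[n] y) :=
  ENNReal.le_tsum (f := fun y : {z // shift^[n] z = shift^[n] y} =>
    eexp (birkhoff g n y) * u y) ⟨y, rfl⟩

theorem transfer_zero (g : MarkovShift A → ℝ) (u : MarkovShift A → ℝ≥0∞) :
    transfer g 0 u = u := by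
  funext x
  rw [transfer, tsum_eq_single (⟨x, rfl⟩ : {y : MarkovShift A // shift^[0] y = x})
    fun y hy => (hy (Subtype.ext y.2)).elim]
  simp [birkhoff, eexp_zero]

theorem transfer_succ (g : MarkovShift A → ℝ) (n : ℕ) (u : MarkovShift A → ℝ≥0∞) :
    transfer g (n + 1) u = transfer g n (transfer g 1 u) := by
  funext x
  let fibers := Equiv.sigmaSubtypeFiberEquivSubtype (shift (A := A))
    (p := fun y => shift^[n + 1] y = x) (q := fun z => shift^[n] z = x) fun y => by
      rw [Function.iterate_succ_apply]
  rw [transfer, ← fibers.tsum_eq, ENNReal.tsum_sigma']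
  refine tsum_congr fun z => ?_
  rw [transfer, ← ENNReal.tsum_mul_left]
  refine tsum_congr fun y => ?_
  have hsum : birkhoff g (n + 1) y = birkhoff g n z + birkhoff g 1 y := by
    rw [birkhoff_succ', y.2, birkhoff_one]
  rw [← mul_assoc, ← eexp_add]
  exact congrArg (fun t => eexp t * u y) hsum

theorem transfer_comp_shift_iterate_mul (g : MarkovShift A → ℝ) (n : ℕ)
    (G u : MarkovShift A → ℝ≥0∞) (x : MarkovShift A) :
    transfer g n (fun y => G (shift^[n] y) * u y) x = G x * transfer g n u x := by
  rw [transfer, transfer, ← ENNReal.tsum_mul_left]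
  exact tsum_congr fun y => by rw [y.2, mul_left_comm]

theorem transfer_indicator_cylOf_le {g : MarkovShift A → ℝ} {D : ℝ}
    (hg : HasDistortionBound g D) (n : ℕ) (y x : MarkovShift A) :
    transfer g n ((cylOf y n).indicator 1) x ≤ eexp (birkhoff g n y + D) := by
  by_cases hx : ∃ z ∈ cylOf y n, shift^[n] z = x
  · obtain ⟨z, hz, rfl⟩ := hx
    rw [transfer, tsum_eq_single (⟨z, rfl⟩ : {y // shift^[n] y = shift^[n] z})]
    · rw [Set.indicator_of_mem hz, Pi.one_apply, mul_one]
      exact eexp_mono (hg.birkhoff_le hz)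
    · refine fun z' hz' => ?_
      rw [Set.indicator_of_notMem, mul_zero]
      exact fun h => hz' (Subtype.ext (ext_shift_iterate (cylOf_eq_of_mem h ▸ hz) z'.2))
  · rw [transfer, ENNReal.tsum_eq_zero.2 fun z => ?_]
    · exact zero_le
    · rw [Set.indicator_of_notMem fun h => hx ⟨z, h, z.2⟩, mul_zero]

theorem transfer_one_eq_tsum (g : MarkovShift A → ℝ) (u : MarkovShift A → ℝ≥0∞)
    (x : MarkovShift A) :
    transfer g 1 u x =
      ∑' a, (followers A a).indicator (fun x => eexp (g (cons a x)) * u (cons a x)) x := by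
  rw [← tsum_shift_fiber fun y => eexp (g y) * u y]
  exact tsum_congr fun y => by rw [birkhoff_one]

theorem measurable_transfer_one {g : MarkovShift A → ℝ} (hg : Continuous g)
    {u : MarkovShift A → ℝ≥0∞} (hu : Measurable u) : Measurable (transfer g 1 u) := by
  rw [funext (transfer_one_eq_tsum g u)]
  have hcons (a : ℕ) := (continuous_cons (A := A) a).measurable
  exact Measurable.tsum fun a =>
    (((continuous_eexp.measurable.comp hg.measurable).comp (hcons a)).mul
      (hu.comp (hcons a))).indicator (isClopen_followers a).isOpen.measurableSet

/-! ### Eigenmeasures of the dual operator -/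

theorem ruelle_indicator_symCyl (g u : MarkovShift A → ℝ) (a : ℕ) (x : MarkovShift A) :
    ruelle g ((symCyl A a).indicator u) x =
      (followers A a).indicator (fun x => Real.exp (g (cons a x)) * u (cons a x)) x := by
  rw [ruelle, tsum_shift_fiber fun y => Real.exp (g y) * (symCyl A a).indicator u y,
    tsum_eq_single a]
  · refine congrFun (Set.indicator_congr fun x hx => ?_) x
    rw [Set.indicator_of_mem (s := symCyl A a) (cons_zero hx)]
  · intro b hb
    refine Set.indicator_apply_eq_zero.2 fun hx => ?_
    rw [Set.indicator_of_notMem, mul_zero]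
    exact fun h => hb ((cons_zero hx).symm.trans h)

theorem iUnion_symCyl : ⋃ a, symCyl A a = Set.univ :=
  Set.eq_univ_of_forall fun x => Set.mem_iUnion.2 ⟨x.1 0, rfl⟩

theorem pairwise_disjoint_symCyl : Pairwise (Function.onFun Disjoint (symCyl A)) :=
  fun _ _ hab => Set.disjoint_left.2 fun _ ha hb => hab (Eq.trans (Eq.symm ha) hb)

theorem measurableSet_symCyl (a : ℕ) : MeasurableSet (symCyl A a) :=
  (isClopen_symCyl a).isOpen.measurableSet

theorem measurableSet_followers (a : ℕ) : MeasurableSet (followers A a) :=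
  (isClopen_followers a).isOpen.measurableSet

theorem measurable_cons (a : ℕ) : Measurable (cons a : MarkovShift A → MarkovShift A) :=
  (continuous_cons a).measurable

/-- `L_g* ν = e^p ν`, tested on measurable functions with values in `[0, ∞]`. -/
def IsEigenmeasure (g : MarkovShift A → ℝ) (p : ℝ) (ν : Measure (MarkovShift A)) : Prop :=
  ∀ u : MarkovShift A → ℝ≥0∞, Measurable u →
    ∫⁻ x, transfer g 1 u x ∂ν = eexp p * ∫⁻ x, u x ∂ν

section Duality

variable {g : MarkovShift A → ℝ} {p : ℝ} {ν : Measure (MarkovShift A)} [IsFiniteMeasure ν]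

/-- Multiplying a bounded test function by the indicator of `[a]` leaves a single term in the
Ruelle operator, so that the duality relation splits into one identity per inverse branch. -/
theorem map_cons_withDensity (hg : Continuous g) {a : ℕ}
    (hbdd : ∃ C, ∀ x ∈ symCyl A a, g x ≤ C)
    (hdual : ∀ u : MarkovShift A → ℝ, Continuous u → BoundedFun u →
      ∫ x, ruelle g u x ∂ν = Real.exp p * ∫ x, u x ∂ν) :
    ((ν.restrict (followers A a)).withDensity fun x => eexp (g (cons a x))).map (cons a) =
      eexp p • ν.restrict (symCyl A a) := by
  obtain ⟨C, hC⟩ := hbdd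
  have hdensity : Measurable fun x : MarkovShift A => eexp (g (cons a x)) :=
    (continuous_eexp.comp (hg.comp (continuous_cons a))).measurable
  have : IsFiniteMeasure
      ((ν.restrict (followers A a)).withDensity fun x => eexp (g (cons a x))) := by
    refine isFiniteMeasure_withDensity (ne_top_of_le_ne_top ?_
      (setLIntegral_mono measurable_const fun x hx => eexp_mono (hC _ (cons_zero hx))))
    rw [setLIntegral_const]
    exact ENNReal.mul_ne_top (eexp_ne_top C) (measure_ne_top _ _)
  have : IsFiniteMeasure (eexp p • ν.restrict (symCyl A a)) :=
    Measure.smul_finite _ (eexp_ne_top p)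
  refine ext_of_forall_integral_eq_of_IsFiniteMeasure fun φ => ?_
  have hcont : Continuous ((symCyl A a).indicator φ) := φ.continuous.indicator fun x hx => by
    simp [(isClopen_symCyl a).frontier_eq] at hx
  have hbounded : BoundedFun ((symCyl A a).indicator φ) :=
    ⟨‖φ‖, fun x => (norm_indicator_le_norm_self φ x).trans (φ.norm_coe_le_norm x)⟩
  have htoReal (t : ℝ) : (eexp t).toReal = Real.exp t := by
    rw [eexp_eq_ofReal, ENNReal.toReal_ofReal (Real.exp_pos t).le]
  rw [integral_map (measurable_cons a).aemeasurable φ.continuous.aestronglyMeasurable,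
    integral_withDensity_eq_integral_toReal_smul hdensity (by simp [(eexp_ne_top _).lt_top]),
    integral_smul_measure, htoReal, smul_eq_mul,
    ← integral_indicator (measurableSet_symCyl a), ← hdual _ hcont hbounded,
    ← integral_indicator (measurableSet_followers a)]
  simp only [ruelle_indicator_symCyl, smul_eq_mul, htoReal]

theorem isEigenmeasure_of_ruelle_dual (hg : Continuous g)
    (hbdd : ∀ a, ∃ C, ∀ x ∈ symCyl A a, g x ≤ C)
    (hdual : ∀ u : MarkovShift A → ℝ, Continuous u → BoundedFun u →
      ∫ x, ruelle g u x ∂ν = Real.exp p * ∫ x, u x ∂ν) : IsEigenmeasure g p ν := by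
  intro u hu
  have hdensity (a : ℕ) : Measurable fun x : MarkovShift A => eexp (g (cons a x)) :=
    (continuous_eexp.comp (hg.comp (continuous_cons a))).measurable
  have hbranch (a : ℕ) : ∫⁻ x in followers A a, eexp (g (cons a x)) * u (cons a x) ∂ν =
      eexp p * ∫⁻ x in symCyl A a, u x ∂ν := by
    rw [← smul_eq_mul, ← lintegral_smul_measure, ← map_cons_withDensity hg (hbdd a) hdual,
      lintegral_map hu (measurable_cons a),
      lintegral_withDensity_eq_lintegral_mul _ (hdensity a) (g := fun x => u (cons a x))
        (hu.comp (measurable_cons a))]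
    rfl
  calc ∫⁻ x, transfer g 1 u x ∂ν
      = ∑' a, ∫⁻ x in followers A a, eexp (g (cons a x)) * u (cons a x) ∂ν := by
        simp only [transfer_one_eq_tsum, ← lintegral_indicator (measurableSet_followers _)]
        exact lintegral_tsum fun a => (((hdensity a).mul
          (hu.comp (measurable_cons a))).indicator (measurableSet_followers a)).aemeasurable
    _ = eexp p * ∫⁻ x, u x ∂ν := by
        simp only [hbranch, ENNReal.tsum_mul_left]
        rw [← lintegral_iUnion measurableSet_symCyl pairwise_disjoint_symCyl, iUnion_symCyl,
          Measure.restrict_univ]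

end Duality

theorem IsEigenmeasure.lintegral_transfer {g : MarkovShift A → ℝ} {p : ℝ}
    {ν : Measure (MarkovShift A)} (hν : IsEigenmeasure g p ν) (hg : Continuous g) (n : ℕ)
    {u : MarkovShift A → ℝ≥0∞} (hu : Measurable u) :
    ∫⁻ x, transfer g n u x ∂ν = eexp (n * p) * ∫⁻ x, u x ∂ν := by
  induction n generalizing u with
  | zero => rw [transfer_zero, Nat.cast_zero, zero_mul, eexp_zero, one_mul]
  | succ n ih =>
    rw [transfer_succ, ih (measurable_transfer_one hg hu), hν u hu, ← mul_assoc, ← eexp_add]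
    push_cast
    rw [add_one_mul]

/-! ### The Gibbs measure -/

namespace IsRPF

variable {g h : MarkovShift A → ℝ} {p : ℝ} {ν : Measure (MarkovShift A)}

theorem continuous (hRPF : IsRPF g p h ν) : Continuous h := hRPF.1

theorem pos (hRPF : IsRPF g p h ν) (x : MarkovShift A) : 0 < h x := hRPF.2.1 x

theorem ruelle_eq (hRPF : IsRPF g p h ν) (x : MarkovShift A) :
    ruelle g h x = Real.exp p * h x :=
  hRPF.2.2.1 x

theorem isProbabilityMeasure (hRPF : IsRPF g p h ν) : IsProbabilityMeasure ν := hRPF.2.2.2.1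

theorem integral_ruelle (hRPF : IsRPF g p h ν) (u : MarkovShift A → ℝ) (hu : Continuous u)
    (hbdd : BoundedFun u) : ∫ x, ruelle g u x ∂ν = Real.exp p * ∫ x, u x ∂ν :=
  hRPF.2.2.2.2.1 u hu hbdd

theorem integral_eq_one (hRPF : IsRPF g p h ν) : ∫ x, h x ∂ν = 1 := hRPF.2.2.2.2.2

theorem isEigenmeasure (hRPF : IsRPF g p h ν) {D : ℝ} (hg : Continuous g)
    (hD : HasDistortionBound g D) : IsEigenmeasure g p ν :=
  have := hRPF.isProbabilityMeasure
  isEigenmeasure_of_ruelle_dual hg hD.exists_le_on_symCyl hRPF.integral_ruelle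

theorem isProbabilityMeasure_gibbs (hRPF : IsRPF g p h ν) :
    IsProbabilityMeasure (gibbs h ν) := by
  have hInt : Integrable h ν :=
    Integrable.of_integral_ne_zero (hRPF.integral_eq_one ▸ one_ne_zero)
  refine ⟨?_⟩
  rw [gibbs, withDensity_apply _ MeasurableSet.univ, Measure.restrict_univ,
    ← ofReal_integral_eq_lintegral_ofReal hInt (ae_of_all _ fun x => (hRPF.pos x).le),
    hRPF.integral_eq_one, ENNReal.ofReal_one]

end IsRPF

theorem transfer_ofReal_of_ruelle_eq {g h : MarkovShift A → ℝ} {p : ℝ} (hpos : ∀ x, 0 < h x)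
    (heigen : ∀ x, ruelle g h x = Real.exp p * h x) (x : MarkovShift A) :
    transfer g 1 (fun y => ENNReal.ofReal (h y)) x = eexp p * ENNReal.ofReal (h x) := by
  have hsum : ruelle g h x ≠ 0 := heigen x ▸ (mul_pos (Real.exp_pos p) (hpos x)).ne'
  rw [eexp_eq_ofReal, ← ENNReal.ofReal_mul (Real.exp_pos p).le, ← heigen, ruelle,
    ENNReal.ofReal_tsum_of_nonneg (fun y => (mul_pos (Real.exp_pos _) (hpos _)).le)
      (by_contra fun hns => hsum (tsum_eq_zero_of_not_summable hns))]
  refine tsum_congr fun y => ?_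
  rw [birkhoff_one, eexp_eq_ofReal, ENNReal.ofReal_mul (Real.exp_pos _).le]

theorem IsEigenmeasure.measurePreserving_shift {g h : MarkovShift A → ℝ} {p : ℝ}
    {ν : Measure (MarkovShift A)} (hν : IsEigenmeasure g p ν) (hh : Measurable h)
    (heigen : ∀ x, transfer g 1 (fun y => ENNReal.ofReal (h y)) x =
      eexp p * ENNReal.ofReal (h x)) :
    MeasurePreserving shift (gibbs h ν) (gibbs h ν) := by
  have hshift : Measurable (shift : MarkovShift A → MarkovShift A) := continuous_shift.measurable
  refine ⟨hshift, Measure.ext fun B hB => ?_⟩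
  have hmeas {S : Set (MarkovShift A)} (hS : MeasurableSet S) :
      Measurable fun x => S.indicator 1 x * ENNReal.ofReal (h x) :=
    (measurable_one.indicator hS).mul hh.ennreal_ofReal
  have hgibbs {S : Set (MarkovShift A)} (hS : MeasurableSet S) :
      gibbs h ν S = ∫⁻ x, S.indicator 1 x * ENNReal.ofReal (h x) ∂ν := by
    rw [gibbs, withDensity_apply _ hS, ← lintegral_indicator hS]
    exact lintegral_congr fun x => by by_cases hx : x ∈ S <;> simp [hx]
  rw [Measure.map_apply hshift hB, hgibbs (hshift hB), hgibbs hB,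
    ← ENNReal.mul_right_inj (eexp_ne_zero p) (eexp_ne_top p),
    ← hν _ (hmeas (hshift hB)), ← lintegral_const_mul _ (hmeas hB)]
  refine lintegral_congr fun x => ?_
  rw [mul_left_comm, ← heigen]
  exact transfer_comp_shift_iterate_mul g 1 (B.indicator 1) _ x

/-! ### The big images and preimages property -/

/-- Every point can be reached in `K` steps from a follower of any admissible symbol, through
symbols of `F` only. -/
def ConnectsThrough (A : ℕ → ℕ → Bool) (K : ℕ) (F : Finset ℕ) : Prop :=
  ∀ a, Admissible A a → ∀ x : MarkovShift A,
    ∃ y ∈ followers A a, shift^[K] y = x ∧ ∀ i < K, y.1 i ∈ F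

theorem exists_shift_iterate_eq_of_isChain (w : List ℕ) {a : ℕ} {x : MarkovShift A}
    (hw : List.IsChain (fun u v => A u v = true) (a :: (w ++ [x.1 0]))) :
    ∃ y ∈ followers A a, shift^[w.length] y = x ∧ ∀ i < w.length, y.1 i ∈ w := by
  induction w generalizing a with
  | nil =>
    exact ⟨x, (List.isChain_pair (R := fun u v => A u v = true)).1 hw, rfl,
      fun i hi => (Nat.not_lt_zero i hi).elim⟩
  | cons b w ih =>
    obtain ⟨hab, hchain⟩ := List.isChain_cons_cons.1 hw
    obtain ⟨y, hby, hyx, hyw⟩ := ih hchain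
    refine ⟨cons b y, ?_, ?_, fun i hi => ?_⟩
    · exact (congrArg (A a) (cons_zero hby)).trans hab
    · rw [List.length_cons, Function.iterate_succ_apply, shift_cons hby, hyx]
    · cases i with
      | zero => exact List.mem_cons.2 (.inl (cons_zero hby))
      | succ i =>
        rw [cons_succ hby]
        exact List.mem_cons_of_mem b (hyw i (Nat.lt_of_succ_lt_succ hi))

theorem FinitelyPrimitive.exists_connectsThrough_succ (hA : FinitelyPrimitive A) :
    ∃ k F, ConnectsThrough A (k + 1) F := by
  obtain ⟨K, F, hKF⟩ := hA
  rcases isEmpty_or_nonempty (MarkovShift A) with hempty | ⟨⟨z⟩⟩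
  · exact ⟨0, ∅, fun _ ⟨x, _⟩ => hempty.elim x⟩
  rcases K with _ | K
  · have hfull {a b : ℕ} (ha : Admissible A a) (hb : Admissible A b) : A a b = true := by
      obtain ⟨w, hw, -, hchain⟩ := hKF a b ha hb
      rw [List.length_eq_zero_iff.1 hw] at hchain
      exact (List.isChain_pair (R := fun u v => A u v = true)).1 hchain
    refine ⟨0, {z.1 0}, fun a ha x => ?_⟩
    have hx : x ∈ followers A (z.1 0) := hfull ⟨z, rfl⟩ ⟨x, rfl⟩
    refine ⟨cons (z.1 0) x, (congrArg (A a) (cons_zero hx)).trans (hfull ha ⟨z, rfl⟩),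
      shift_cons hx, fun i hi => ?_⟩
    rw [Nat.lt_one_iff.1 hi]
    exact Finset.mem_singleton.2 (cons_zero hx)
  · refine ⟨K, F, fun a ha x => ?_⟩
    obtain ⟨w, hwK, hwF, hchain⟩ := hKF a (x.1 0) ha ⟨x, rfl⟩
    obtain ⟨y, hy, hyx, hyw⟩ := exists_shift_iterate_eq_of_isChain w hchain
    exact ⟨y, hy, hwK ▸ hyx, fun i hi => hwF _ (hyw i (hwK ▸ hi))⟩

theorem neg_mul_le_birkhoff {g : MarkovShift A → ℝ} {C : ℝ} {n : ℕ} {y : MarkovShift A}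
    (h : ∀ i < n, -C ≤ g (shift^[i] y)) : -(n * C) ≤ birkhoff g n y := by
  simpa [birkhoff] using Finset.card_nsmul_le_sum (Finset.range n) _ (-C)
    fun i hi => h i (Finset.mem_range.1 hi)

section BoundedImages

variable {g : MarkovShift A → ℝ} {p D C : ℝ} {K : ℕ} {F : Finset ℕ}
  {ν : Measure (MarkovShift A)}

theorem IsEigenmeasure.eexp_neg_le_measure_followers [IsProbabilityMeasure ν]
    (hν : IsEigenmeasure g p ν) (hg : Continuous g) (hA : ConnectsThrough A K F)
    (hC : ∀ x : MarkovShift A, x.1 0 ∈ F → -C ≤ g x) {a : ℕ} (ha : Admissible A a) :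
    eexp (-(K * C)) ≤ eexp (K * p) * ν (followers A a) := by
  have hpoint (x : MarkovShift A) :
      eexp (-(K * C)) ≤ transfer g K ((followers A a).indicator 1) x := by
    obtain ⟨y, hya, rfl, hyF⟩ := hA a ha x
    refine le_trans ?_ (le_transfer g K _ y)
    rw [Set.indicator_of_mem hya, Pi.one_apply, mul_one]
    exact eexp_mono (neg_mul_le_birkhoff fun i hi =>
      hC _ ((shift_iterate_coord i y 0).symm ▸ hyF i hi))
  calc eexp (-(K * C)) = ∫⁻ _, eexp (-(K * C)) ∂ν := by
        rw [lintegral_const, measure_univ, mul_one]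
    _ ≤ ∫⁻ x, transfer g K ((followers A a).indicator 1) x ∂ν := lintegral_mono hpoint
    _ = eexp (K * p) * ν (followers A a) := by
        rw [hν.lintegral_transfer hg K (measurable_one.indicator (measurableSet_followers a)),
          lintegral_indicator_one (measurableSet_followers a)]

theorem measurableSet_cylOf (y : MarkovShift A) (n : ℕ) : MeasurableSet (cylOf y n) :=
  (isClopen_cylOf y n).isOpen.measurableSet

theorem IsEigenmeasure.eexp_mul_measure_followers_le (hν : IsEigenmeasure g p ν)
    (hg : Continuous g) (hD : HasDistortionBound g D) (y : MarkovShift A) (n : ℕ) :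
    eexp (birkhoff g (n + 1) y - D) * ν (followers A (y.1 n)) ≤
      eexp ((n + 1 : ℕ) * p) * ν (cylOf y (n + 1)) := by
  rw [← lintegral_indicator_one (measurableSet_cylOf y _),
    ← hν.lintegral_transfer hg _ (measurable_one.indicator (measurableSet_cylOf y _)),
    ← lintegral_indicator_const (measurableSet_followers _)]
  refine lintegral_mono fun x => Set.indicator_apply_le' (fun hx => ?_) fun _ => zero_le
  obtain ⟨z, hzy, rfl⟩ := exists_mem_cylOf_shift_iterate_eq y n hx
  refine le_trans ?_ (le_transfer g (n + 1) _ z)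
  rw [Set.indicator_of_mem hzy, Pi.one_apply, mul_one]
  exact eexp_mono (hD.le_birkhoff hzy)

theorem admissible_coord (y : MarkovShift A) (n : ℕ) : Admissible A (y.1 n) :=
  ⟨shift^[n] y, shift_iterate_coord n y 0⟩

theorem IsEigenmeasure.eexp_birkhoff_le_measure_cylOf [IsProbabilityMeasure ν]
    (hν : IsEigenmeasure g p ν) (hg : Continuous g) (hD : HasDistortionBound g D)
    (hA : ConnectsThrough A K F) (hC : ∀ x : MarkovShift A, x.1 0 ∈ F → -C ≤ g x)
    (y : MarkovShift A) (n : ℕ) :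
    eexp (birkhoff g (n + 1) y) ≤
      eexp (D + K * C + K * p) * (eexp ((n + 1 : ℕ) * p) * ν (cylOf y (n + 1))) := by
  set S := birkhoff g (n + 1) y
  have hfollowers := hν.eexp_neg_le_measure_followers hg hA hC (admissible_coord y n)
  have hcyl := hν.eexp_mul_measure_followers_le hg hD y n
  calc eexp S = eexp (D + K * C) * (eexp (S - D) * eexp (-(K * C))) := by
        rw [← eexp_add, ← eexp_add]
        congr 1
        ring
    _ ≤ eexp (D + K * C) * (eexp (S - D) * (eexp (K * p) * ν (followers A (y.1 n)))) := by
        gcongr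
    _ = eexp (D + K * C + K * p) * (eexp (S - D) * ν (followers A (y.1 n))) := by
        rw [eexp_add (D + K * C)]
        ring
    _ ≤ eexp (D + K * C + K * p) * (eexp ((n + 1 : ℕ) * p) * ν (cylOf y (n + 1))) :=
        mul_le_mul_right hcyl _

theorem IsEigenmeasure.measure_cylOf_ne_zero [IsProbabilityMeasure ν]
    (hν : IsEigenmeasure g p ν) (hg : Continuous g) (hD : HasDistortionBound g D)
    (hA : ConnectsThrough A K F) (hC : ∀ x : MarkovShift A, x.1 0 ∈ F → -C ≤ g x)
    (y : MarkovShift A) (n : ℕ) : ν (cylOf y n) ≠ 0 := by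
  intro h0
  have hle := hν.eexp_birkhoff_le_measure_cylOf hg hD hA hC y n
  rw [measure_mono_null (cylOf_antitone y n.le_succ) h0, mul_zero, mul_zero] at hle
  exact eexp_ne_zero _ (le_zero_iff.1 hle)

theorem IsEigenmeasure.measure_cylOf_inter_preimage_le [IsProbabilityMeasure ν]
    (hν : IsEigenmeasure g p ν) (hg : Continuous g) (hD : HasDistortionBound g D)
    (hA : ConnectsThrough A K F) (hC : ∀ x : MarkovShift A, x.1 0 ∈ F → -C ≤ g x)
    (y : MarkovShift A) (n : ℕ) {B : Set (MarkovShift A)} (hB : MeasurableSet B) :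
    ν (cylOf y (n + 1) ∩ shift^[n + 1] ⁻¹' B) ≤
      eexp (2 * D + K * C + K * p) * ν B * ν (cylOf y (n + 1)) := by
  set S := birkhoff g (n + 1) y
  set E := eexp ((n + 1 : ℕ) * p)
  have hmeas : MeasurableSet (cylOf y (n + 1) ∩ shift^[n + 1] ⁻¹' B) :=
    (measurableSet_cylOf y (n + 1)).inter ((continuous_shift.iterate (n + 1)).measurable hB)
  have hsplit : (cylOf y (n + 1) ∩ shift^[n + 1] ⁻¹' B).indicator 1 = fun x =>
      B.indicator (1 : MarkovShift A → ℝ≥0∞) (shift^[n + 1] x) *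
        (cylOf y (n + 1)).indicator 1 x := by
    rw [Set.inter_indicator_one, mul_comm]
    rfl
  refine (ENNReal.mul_le_mul_iff_right (eexp_ne_zero ((n + 1 : ℕ) * p)) (eexp_ne_top _)).1 ?_
  calc E * ν (cylOf y (n + 1) ∩ shift^[n + 1] ⁻¹' B)
      = ∫⁻ x, B.indicator 1 x * transfer g (n + 1) ((cylOf y (n + 1)).indicator 1) x ∂ν := by
        rw [← lintegral_indicator_one hmeas,
          ← hν.lintegral_transfer hg _ (measurable_one.indicator hmeas), hsplit]
        simp only [transfer_comp_shift_iterate_mul]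
    _ ≤ ∫⁻ x, B.indicator 1 x * eexp (S + D) ∂ν :=
        lintegral_mono fun x => mul_le_mul_right (transfer_indicator_cylOf_le hD (n + 1) y x) _
    _ = eexp D * ν B * eexp S := by
        rw [lintegral_mul_const _ (measurable_one.indicator hB), lintegral_indicator_one hB,
          eexp_add]
        ring
    _ ≤ eexp D * ν B * (eexp (D + K * C + K * p) * (E * ν (cylOf y (n + 1)))) :=
        mul_le_mul_right (hν.eexp_birkhoff_le_measure_cylOf hg hD hA hC y n) _
    _ = E * (eexp (2 * D + K * C + K * p) * ν B * ν (cylOf y (n + 1))) := by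
        rw [show 2 * D + K * C + K * p = D + (D + K * C + K * p) by ring, eexp_add D]
        ring

end BoundedImages

/-! ### Comparison of the Gibbs measure with the eigenmeasure -/

/-- The first `n` symbols of `x`, as a point of a countable discrete space. -/
def coords (n : ℕ) (x : MarkovShift A) : Fin n → ℕ := fun i => x.1 i

theorem measurable_coords (n : ℕ) : Measurable (coords n : MarkovShift A → Fin n → ℕ) :=
  measurable_pi_lambda _ fun i => (continuous_coord i).measurable

theorem preimage_coords_singleton (n : ℕ) (x : MarkovShift A) :
    coords n ⁻¹' {coords n x} = cylOf x n :=
  Set.ext fun _ => funext_iff.trans Fin.forall_iff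

theorem exists_eq_comp_coords {n : ℕ} {φ : MarkovShift A → ℝ≥0∞}
    (hφ : ∀ x, ∀ y ∈ cylOf x n, φ y = φ x) : ∃ ψ : (Fin n → ℕ) → ℝ≥0∞, φ = ψ ∘ coords n := by
  have hfactor : Function.FactorsThrough φ (coords n) := fun y x hyx =>
    hφ x y (preimage_coords_singleton n x ▸ hyx)
  exact ⟨Function.extend (coords n) φ 0, funext fun x => (hfactor.extend_apply 0 x).symm⟩

theorem measurable_of_forall_mem_cylOf_eq {n : ℕ} {φ : MarkovShift A → ℝ≥0∞}
    (hφ : ∀ x, ∀ y ∈ cylOf x n, φ y = φ x) : Measurable φ := by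
  obtain ⟨ψ, rfl⟩ := exists_eq_comp_coords hφ
  exact (measurable_of_countable ψ).comp (measurable_coords n)

theorem lintegral_le_of_measure_cylOf_le {n : ℕ} {φ : MarkovShift A → ℝ≥0∞}
    (hφ : ∀ x, ∀ y ∈ cylOf x n, φ y = φ x) {μ ν : Measure (MarkovShift A)}
    (hμν : ∀ x, μ (cylOf x n) ≤ ν (cylOf x n)) : ∫⁻ x, φ x ∂μ ≤ ∫⁻ x, φ x ∂ν := by
  obtain ⟨ψ, rfl⟩ := exists_eq_comp_coords hφ
  have hψ := measurable_of_countable ψ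
  have hcoords := measurable_coords (A := A) n
  simp only [Function.comp_apply]
  rw [← lintegral_map hψ hcoords, ← lintegral_map hψ hcoords, lintegral_countable',
    lintegral_countable']
  refine ENNReal.tsum_le_tsum fun w => mul_le_mul_right ?_ _
  rw [Measure.map_apply hcoords (measurableSet_singleton w),
    Measure.map_apply hcoords (measurableSet_singleton w)]
  rcases (coords n ⁻¹' {w} : Set (MarkovShift A)).eq_empty_or_nonempty with hw | ⟨x, rfl⟩
  · rw [hw, measure_empty, measure_empty]
  · rw [preimage_coords_singleton]
    exact hμν x

/-- The infimum of `H` over the `n`-cylinder around `x`: the largest function below `H` that only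
depends on the first `n` symbols. -/
noncomputable def cylInf (H : MarkovShift A → ℝ≥0∞) (n : ℕ) (x : MarkovShift A) : ℝ≥0∞ :=
  ⨅ y ∈ cylOf x n, H y

theorem cylInf_le (H : MarkovShift A → ℝ≥0∞) (n : ℕ) (x : MarkovShift A) : cylInf H n x ≤ H x :=
  biInf_le H (mem_cylOf_self x n)

theorem cylInf_mono (H : MarkovShift A → ℝ≥0∞) (x : MarkovShift A) :
    Monotone fun n => cylInf H n x :=
  fun _ _ hmn => biInf_mono fun _ hy => cylOf_antitone x hmn hy

theorem cylInf_eq_of_mem (H : MarkovShift A → ℝ≥0∞) {n : ℕ} {x y : MarkovShift A}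
    (hy : y ∈ cylOf x n) : cylInf H n y = cylInf H n x := by
  rw [cylInf, cylInf, cylOf_eq_of_mem hy]

theorem tendsto_cylInf {H : MarkovShift A → ℝ≥0∞} (hH : LowerSemicontinuous H)
    (x : MarkovShift A) : Tendsto (fun n => cylInf H n x) atTop (𝓝 (H x)) := by
  refine tendsto_order.2 ⟨fun c hc => ?_, fun c hc =>
    Eventually.of_forall fun _ => (cylInf_le H _ x).trans_lt hc⟩
  obtain ⟨b, hcb, hb⟩ := exists_between hc
  obtain ⟨N, -, hN⟩ := (hasBasis_nhds_cylOf x).mem_iff.1 (hH x b hb)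
  filter_upwards [eventually_ge_atTop N] with _ hn
  exact hcb.trans_le ((le_iInf₂ fun y hy => (hN hy).le).trans (cylInf_mono H x hn))

theorem tendsto_lintegral_cylInf {H : MarkovShift A → ℝ≥0∞} (hH : LowerSemicontinuous H)
    (ν : Measure (MarkovShift A)) :
    Tendsto (fun n => ∫⁻ x, cylInf H n x ∂ν) atTop (𝓝 (∫⁻ x, H x ∂ν)) :=
  lintegral_tendsto_of_tendsto_of_monotone
    (fun _ => (measurable_of_forall_mem_cylOf_eq fun _ _ => cylInf_eq_of_mem H).aemeasurable)
    (ae_of_all _ (cylInf_mono H)) (ae_of_all _ (tendsto_cylInf hH))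

/-- By invariance `B` has the same mass as its preimage of order `n + 1`, which is nearly
independent of the functions of the first `n + 1` symbols, hence of the density in the limit. -/
theorem withDensity_le_of_measure_cylOf_inter_preimage_le {ν : Measure (MarkovShift A)}
    {H : MarkovShift A → ℝ≥0∞} (hH : LowerSemicontinuous H)
    [IsProbabilityMeasure (ν.withDensity H)]
    (hinv : MeasurePreserving shift (ν.withDensity H) (ν.withDensity H))
    {B : Set (MarkovShift A)} (hB : MeasurableSet B) {c : ℝ≥0∞}
    (hc : ∀ y n, ν (cylOf y (n + 1) ∩ shift^[n + 1] ⁻¹' B) ≤ c * ν (cylOf y (n + 1))) :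
    ν.withDensity H B ≤ c := by
  have hmass : ∫⁻ x, H x ∂ν = 1 := by
    rw [← setLIntegral_univ, ← withDensity_apply _ MeasurableSet.univ, measure_univ]
  have hstep (n : ℕ) : ν.withDensity H B + ∫⁻ x, cylInf H (n + 1) x ∂ν ≤ c + 1 := by
    have hpre := (continuous_shift.iterate (n + 1)).measurable hB
    have hmix : ∫⁻ x in shift^[n + 1] ⁻¹' B, cylInf H (n + 1) x ∂ν ≤ c :=
      calc ∫⁻ x in shift^[n + 1] ⁻¹' B, cylInf H (n + 1) x ∂ν
          ≤ ∫⁻ x, cylInf H (n + 1) x ∂(c • ν) :=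
            lintegral_le_of_measure_cylOf_le (fun _ _ => cylInf_eq_of_mem H) fun y => by
              rw [Measure.restrict_apply (measurableSet_cylOf y _)]
              exact hc y n
        _ ≤ c * ∫⁻ x, H x ∂ν := by
            rw [lintegral_smul_measure]
            exact mul_le_mul_right (lintegral_mono (cylInf_le H (n + 1))) c
        _ = c := by rw [hmass, mul_one]
    calc ν.withDensity H B + ∫⁻ x, cylInf H (n + 1) x ∂ν
        = ∫⁻ x in shift^[n + 1] ⁻¹' B, H x ∂ν +
            (∫⁻ x in shift^[n + 1] ⁻¹' B, cylInf H (n + 1) x ∂ν +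
              ∫⁻ x in (shift^[n + 1] ⁻¹' B)ᶜ, cylInf H (n + 1) x ∂ν) := by
          rw [lintegral_add_compl _ hpre, ← withDensity_apply _ hpre,
            (hinv.iterate (n + 1)).measure_preimage hB.nullMeasurableSet]
      _ ≤ ∫⁻ x in shift^[n + 1] ⁻¹' B, H x ∂ν +
            (c + ∫⁻ x in (shift^[n + 1] ⁻¹' B)ᶜ, H x ∂ν) := by
          gcongr with x
          exact cylInf_le H (n + 1) x
      _ = c + 1 := by rw [add_left_comm, lintegral_add_compl _ hpre, hmass]
  have hlim := (tendsto_const_nhds (x := ν.withDensity H B)).add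
    ((tendsto_add_atTop_iff_nat 1).2 (tendsto_lintegral_cylInf hH ν))
  rw [hmass] at hlim
  exact (ENNReal.add_le_add_iff_right ENNReal.one_ne_top).1 (le_of_tendsto' hlim hstep)

section Gibbs

variable {g h : MarkovShift A → ℝ} {p D C : ℝ} {K : ℕ} {F : Finset ℕ}
  {ν : Measure (MarkovShift A)}

theorem IsRPF.measurePreserving_shift_gibbs (hRPF : IsRPF g p h ν) (hg : Continuous g)
    (hD : HasDistortionBound g D) : MeasurePreserving shift (gibbs h ν) (gibbs h ν) :=
  (hRPF.isEigenmeasure hg hD).measurePreserving_shift hRPF.continuous.measurable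
    (transfer_ofReal_of_ruelle_eq hRPF.pos hRPF.ruelle_eq)

theorem IsRPF.gibbs_le (hRPF : IsRPF g p h ν) (hg : Continuous g)
    (hD : HasDistortionBound g D) (hA : ConnectsThrough A K F)
    (hC : ∀ x : MarkovShift A, x.1 0 ∈ F → -C ≤ g x) {B : Set (MarkovShift A)}
    (hB : MeasurableSet B) : gibbs h ν B ≤ eexp (2 * D + K * C + K * p) * ν B :=
  have := hRPF.isProbabilityMeasure
  have : IsProbabilityMeasure (ν.withDensity fun x => ENNReal.ofReal (h x)) :=
    hRPF.isProbabilityMeasure_gibbs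
  withDensity_le_of_measure_cylOf_inter_preimage_le
    (H := fun x => ENNReal.ofReal (h x))
    (ENNReal.continuous_ofReal.comp hRPF.continuous).lowerSemicontinuous
    (hRPF.measurePreserving_shift_gibbs hg hD) hB fun y n =>
      (hRPF.isEigenmeasure hg hD).measure_cylOf_inter_preimage_le hg hD hA hC y n hB

theorem IsRPF.gibbs_cylOf_ne_zero (hRPF : IsRPF g p h ν) (hg : Continuous g)
    (hD : HasDistortionBound g D) (hA : ConnectsThrough A K F)
    (hC : ∀ x : MarkovShift A, x.1 0 ∈ F → -C ≤ g x) (y : MarkovShift A) (n : ℕ) :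
    gibbs h ν (cylOf y n) ≠ 0 := by
  have := hRPF.isProbabilityMeasure
  have hac : ν ≪ gibbs h ν := withDensity_absolutelyContinuous'
    hRPF.continuous.measurable.ennreal_ofReal.aemeasurable
    (ae_of_all _ fun x => (ENNReal.ofReal_pos.2 (hRPF.pos x)).ne')
  exact fun h0 => (hRPF.isEigenmeasure hg hD).measure_cylOf_ne_zero hg hD hA hC y n (hac h0)

end Gibbs

/-! ### Uniform tail estimates -/

/-- The supremum of `e^g` over the points starting with `a`. -/
noncomputable def symSup (g : MarkovShift A → ℝ) (a : ℕ) : ℝ≥0∞ := ⨆ x ∈ symCyl A a, eexp (g x)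

theorem eexp_le_symSup (g : MarkovShift A → ℝ) {a : ℕ} {x : MarkovShift A}
    (hx : x ∈ symCyl A a) : eexp (g x) ≤ symSup g a :=
  le_iSup₂ (f := fun x (_ : x ∈ symCyl A a) => eexp (g x)) x hx

theorem symSup_const_mul_le (g : MarkovShift A → ℝ) {c : ℝ} (hc : 0 ≤ c) (a : ℕ) :
    symSup (fun x => c * g x) a ≤ symSup g a ^ c :=
  iSup₂_le fun x hx => by
    change eexp (c * g x) ≤ symSup g a ^ c
    rw [eexp_mul]
    exact ENNReal.rpow_le_rpow (eexp_le_symSup g hx) hc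

section Tail

variable {g h : MarkovShift A → ℝ} {p D C : ℝ} {ν : Measure (MarkovShift A)}

theorem IsEigenmeasure.tsum_symSup_ne_top [IsProbabilityMeasure ν] {K : ℕ} {F : Finset ℕ}
    (hν : IsEigenmeasure g p ν) (hg : Continuous g) (hD : HasDistortionBound g D)
    (hA : ConnectsThrough A K F) (hC : ∀ x : MarkovShift A, x.1 0 ∈ F → -C ≤ g x) :
    ∑' a, symSup g a ≠ ∞ := by
  have hsymbol (a : ℕ) :
      symSup g a ≤ eexp (D + K * C + K * p) * eexp p * ν (symCyl A a) := by
    refine iSup₂_le fun x hx => ?_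
    have hle := hν.eexp_birkhoff_le_measure_cylOf hg hD hA hC x 0
    rwa [zero_add, birkhoff_one, Nat.cast_one, one_mul, cylOf_one, show x.1 0 = a from hx,
      ← mul_assoc] at hle
  refine ne_top_of_le_ne_top ?_ (ENNReal.tsum_le_tsum hsymbol)
  rw [ENNReal.tsum_mul_left, ← measure_iUnion pairwise_disjoint_symCyl measurableSet_symCyl]
  exact ENNReal.mul_ne_top (ENNReal.mul_ne_top (eexp_ne_top _) (eexp_ne_top p))
    (measure_ne_top ν _)

theorem IsEigenmeasure.eexp_mul_measure_symCyl_le [IsProbabilityMeasure ν]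
    (hν : IsEigenmeasure g p ν) (hD : HasDistortionBound g D) (a : ℕ) :
    eexp p * ν (symCyl A a) ≤ eexp D * symSup g a := by
  rcases (symCyl A a).eq_empty_or_nonempty with h | ⟨x, hx⟩
  · rw [h, measure_empty, mul_zero]
    exact zero_le
  have hcyl : symCyl A a = cylOf x 1 := by rw [cylOf_one, show x.1 0 = a from hx]
  calc eexp p * ν (symCyl A a) = ∫⁻ z, transfer g 1 ((cylOf x 1).indicator 1) z ∂ν := by
        rw [hν _ (measurable_one.indicator (measurableSet_cylOf x 1)),
          lintegral_indicator_one (measurableSet_cylOf x 1), hcyl]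
    _ ≤ ∫⁻ _, eexp (birkhoff g 1 x + D) ∂ν :=
        lintegral_mono fun z => transfer_indicator_cylOf_le hD 1 x z
    _ = eexp D * eexp (g x) := by
        rw [lintegral_const, measure_univ, mul_one, birkhoff_one, eexp_add, mul_comm]
    _ ≤ eexp D * symSup g a := by
        gcongr
        exact eexp_le_symSup g hx

theorem IsEigenmeasure.eexp_mul_measure_le_coord_le [IsProbabilityMeasure ν]
    (hν : IsEigenmeasure g p ν) (hD : HasDistortionBound g D) (N : ℕ) :
    eexp p * ν {x | N ≤ x.1 0} ≤ eexp D * ∑' a, symSup g (a + N) := by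
  have hunion : {x : MarkovShift A | N ≤ x.1 0} ⊆ ⋃ a, symCyl A (a + N) := fun x hx =>
    Set.mem_iUnion.2 ⟨x.1 0 - N, (Nat.sub_add_cancel hx).symm⟩
  calc eexp p * ν {x | N ≤ x.1 0} ≤ eexp p * ∑' a, ν (symCyl A (a + N)) := by
        gcongr
        exact (measure_mono hunion).trans (measure_iUnion_le _)
    _ = ∑' a, eexp p * ν (symCyl A (a + N)) := ENNReal.tsum_mul_left.symm
    _ ≤ ∑' a, eexp D * symSup g (a + N) :=
        ENNReal.tsum_le_tsum fun a => hν.eexp_mul_measure_symCyl_le hD _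
    _ = eexp D * ∑' a, symSup g (a + N) := ENNReal.tsum_mul_left

theorem IsRPF.gibbs_le_coord_le {k : ℕ} {F : Finset ℕ} (hRPF : IsRPF g p h ν)
    (hg : Continuous g) (hD : HasDistortionBound g D) (hA : ConnectsThrough A (k + 1) F)
    (hC : ∀ x : MarkovShift A, x.1 0 ∈ F → -C ≤ g x) (N : ℕ) :
    gibbs h ν {x | N ≤ x.1 0} ≤
      eexp ((k + 3) * D + (k + 1) * C) * (∑' a, symSup g a) ^ k * ∑' a, symSup g (a + N) := by
  have := hRPF.isProbabilityMeasure
  have hν := hRPF.isEigenmeasure hg hD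
  have hpressure : eexp p ≤ eexp D * ∑' a, symSup g a := by
    simpa using hν.eexp_mul_measure_le_coord_le hD 0
  calc gibbs h ν {x | N ≤ x.1 0}
      ≤ eexp (2 * D + (k + 1 : ℕ) * C + (k + 1 : ℕ) * p) * ν {x | N ≤ x.1 0} :=
        hRPF.gibbs_le hg hD hA hC (isClopen_coord_mem 0 (Set.Ici N)).isOpen.measurableSet
    _ = eexp (2 * D + (k + 1) * C) * eexp p ^ k * (eexp p * ν {x | N ≤ x.1 0}) := by
        rw [eexp_add, eexp_nat_mul, pow_succ]
        push_cast
        ring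
    _ ≤ eexp (2 * D + (k + 1) * C) * (eexp D * ∑' a, symSup g a) ^ k *
          (eexp D * ∑' a, symSup g (a + N)) := by
        have htail := hν.eexp_mul_measure_le_coord_le hD N
        gcongr
    _ = eexp ((k + 3) * D + (k + 1) * C) * (∑' a, symSup g a) ^ k *
          ∑' a, symSup g (a + N) := by
        rw [show (k + 3) * D + (k + 1) * C = 2 * D + (k + 1) * C + k * D + D by ring,
          eexp_add _ D, eexp_add _ (k * D), eexp_nat_mul]
        ring

end Tail

theorem tsum_rpow_le_rpow_tsum {α : Type*} (s : α → ℝ≥0∞) {c : ℝ} (hc : 1 ≤ c) :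
    ∑' a, s a ^ c ≤ (∑' a, s a) ^ c := by
  have hsplit (t : ℝ≥0∞) : t ^ c = t * t ^ (c - 1) := by
    conv_lhs => rw [← add_sub_cancel 1 c, ENNReal.rpow_add_of_nonneg _ _ zero_le_one
      (sub_nonneg.2 hc), ENNReal.rpow_one]
  calc ∑' a, s a ^ c ≤ ∑' a, s a * (∑' b, s b) ^ (c - 1) := by
        refine ENNReal.tsum_le_tsum fun a => (hsplit (s a)).trans_le ?_
        gcongr
        exact ENNReal.le_tsum a
    _ = (∑' a, s a) ^ c := by rw [ENNReal.tsum_mul_right, ← hsplit]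

theorem IsRPF.gibbs_const_mul_le_coord_le {g h : MarkovShift A → ℝ} {p D C : ℝ}
    {ν : Measure (MarkovShift A)} {k : ℕ} {F : Finset ℕ} {c : ℝ}
    (hRPF : IsRPF (fun x => c * g x) p h ν) (hc : 1 ≤ c) (hg : Continuous g)
    (hD : HasDistortionBound g D) (hA : ConnectsThrough A (k + 1) F)
    (hC : ∀ x : MarkovShift A, x.1 0 ∈ F → -C ≤ g x) (N : ℕ) :
    gibbs h ν {x | N ≤ x.1 0} ≤ (eexp ((k + 3) * D + (k + 1) * C) * (∑' a, symSup g a) ^ k *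
      ∑' a, symSup g (a + N)) ^ c := by
  have hc0 : 0 ≤ c := zero_le_one.trans hc
  have hDc : HasDistortionBound (fun x => c * g x) (c * D) := by
    simpa only [abs_of_nonneg hc0] using hD.const_mul c
  have hCc (x : MarkovShift A) (hx : x.1 0 ∈ F) : -(c * C) ≤ c * g x := by
    rw [← mul_neg]
    exact mul_le_mul_of_nonneg_left (hC x hx) hc0
  have hsum (M : ℕ) : ∑' a, symSup (fun x => c * g x) (a + M) ≤ (∑' a, symSup g (a + M)) ^ c :=
    (ENNReal.tsum_le_tsum fun a => symSup_const_mul_le g hc0 (a + M)).trans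
      (tsum_rpow_le_rpow_tsum _ hc)
  calc gibbs h ν {x | N ≤ x.1 0}
      ≤ eexp ((k + 3) * (c * D) + (k + 1) * (c * C)) *
          (∑' a, symSup (fun x => c * g x) a) ^ k * ∑' a, symSup (fun x => c * g x) (a + N) :=
        hRPF.gibbs_le_coord_le (continuous_const.mul hg) hDc hA hCc N
    _ ≤ eexp ((k + 3) * D + (k + 1) * C) ^ c * ((∑' a, symSup g a) ^ c) ^ k *
          (∑' a, symSup g (a + N)) ^ c := by
        rw [← eexp_mul, show c * ((k + 3) * D + (k + 1) * C) =
          (k + 3) * (c * D) + (k + 1) * (c * C) by ring]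
        gcongr
        exacts [hsum 0, hsum N]
    _ = _ := by
        rw [ENNReal.mul_rpow_of_nonneg _ _ hc0, ENNReal.mul_rpow_of_nonneg _ _ hc0,
          ← ENNReal.rpow_natCast, ← ENNReal.rpow_natCast, ← ENNReal.rpow_mul,
          ← ENNReal.rpow_mul, mul_comm c]

section ExpTight

variable {ι : Type*} {l : Filter ι} {β : ι → ℝ} {m : ι → Measure (MarkovShift A)}

/-- Exponential tightness at speed `β` along `l`, for the exhaustion of the shift by the sets
`{x₀ < N}`. -/
def IsExpTight (m : ι → Measure (MarkovShift A)) (β : ι → ℝ) (l : Filter ι) : Prop :=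
  ∃ T : ℕ → ℝ≥0∞, Tendsto T atTop (𝓝 0) ∧
    ∀ᶠ i in l, ∀ N, m i {x | N ≤ x.1 0} ≤ T N ^ β i

theorem isExpTight_gibbs [l.NeBot] (hA : FinitelyPrimitive A) {f : MarkovShift A → ℝ}
    (hf : Continuous f) {D : ℝ} (hD : HasDistortionBound f D) (hβ : Tendsto β l atTop)
    {p : ι → ℝ} {h : ι → MarkovShift A → ℝ} {ν : ι → Measure (MarkovShift A)}
    (hRPF : ∀ i, IsRPF (fun x => β i * f x) (p i) (h i) (ν i)) :
    IsExpTight (fun i => gibbs (h i) (ν i)) β l := by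
  obtain ⟨k, F, hF⟩ := hA.exists_connectsThrough_succ
  obtain ⟨i₀, hi₀⟩ := (hβ.eventually_gt_atTop 0).exists
  set g : MarkovShift A → ℝ := fun x => β i₀ * f x
  have hg : Continuous g := continuous_const.mul hf
  have hgD := hD.const_mul (β i₀)
  obtain ⟨C, hC⟩ := hgD.exists_neg_le_on_finset F
  have := (hRPF i₀).isProbabilityMeasure
  have hsum := ((hRPF i₀).isEigenmeasure hg hgD).tsum_symSup_ne_top hg hgD hF hC
  set M := eexp ((k + 3) * (|β i₀| * D) + (k + 1) * C) * (∑' a, symSup g a) ^ k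
  have hM : M ≠ ∞ := ENNReal.mul_ne_top (eexp_ne_top _) (ENNReal.pow_ne_top hsum)
  refine ⟨fun N => (M * ∑' a, symSup g (a + N)) ^ (β i₀)⁻¹, ?_, ?_⟩
  · have htail := (ENNReal.Tendsto.const_mul (ENNReal.tendsto_sum_nat_add _ hsum)
      (.inr hM)).ennrpow_const (β i₀)⁻¹
    rwa [mul_zero, ENNReal.zero_rpow_of_pos (inv_pos.2 hi₀)] at htail
  · filter_upwards [hβ.eventually_ge_atTop (β i₀)] with i hi N
    have hscale : IsRPF (fun x => β i / β i₀ * g x) (p i) (h i) (ν i) := by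
      simpa only [g, ← mul_assoc, div_mul_cancel₀ _ hi₀.ne'] using hRPF i
    rw [← ENNReal.rpow_mul, inv_mul_eq_div]
    exact hscale.gibbs_const_mul_le_coord_le ((one_le_div hi₀).2 hi) hg hgD hF hC N

end ExpTight

/-! ### Cylinder rates -/

theorem eventually_mul_lt_of_tendsto_log {ι : Type*} {l : Filter ι} {β u v : ι → ℝ}
    {a b c : ℝ} (hβ : Tendsto β l atTop) (hu0 : ∀ i, 0 < u i) (hc : 0 < c)
    (hu : Tendsto (fun i => 1 / β i * Real.log (u i)) l (𝓝 a))
    (hv : Tendsto (fun i => 1 / β i * Real.log (v i)) l (𝓝 b)) (hba : b < a) :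
    ∀ᶠ i in l, c * v i < u i := by
  have hlog : Tendsto (fun i => 1 / β i * Real.log c) l (𝓝 0) := by
    simpa using (hβ.const_div_atTop 1).mul_const (Real.log c)
  filter_upwards [(hlog.add hv).eventually_lt hu (by rwa [zero_add]),
    hβ.eventually_gt_atTop 0] with i hi hβi
  by_contra! hle
  have hcv : 0 < c * v i := (hu0 i).trans_le hle
  rw [← mul_add, ← Real.log_mul hc.ne' (pos_of_mul_pos_right hcv hc.le).ne'] at hi
  exact absurd (lt_of_mul_lt_mul_left hi (one_div_pos.2 hβi).le)
    (Real.log_le_log (hu0 i) hle).not_gt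

theorem cylOf_inter_coord_eq {x y : MarkovShift A} {n : ℕ} (hy : y ∈ cylOf x n) :
    cylOf x n ∩ {z | z.1 n = y.1 n} = cylOf y (n + 1) := by
  rw [← cylOf_eq_of_mem hy]
  exact Set.ext fun z => Nat.forall_lt_succ_right.symm

theorem measureReal_cylOf_le_sum {μ : Measure (MarkovShift A)} [IsFiniteMeasure μ]
    (hμ : MeasurePreserving shift μ μ) (x : MarkovShift A) (n N : ℕ) :
    μ.real (cylOf x n) ≤
      ∑ a ∈ Finset.range N, μ.real (cylOf x n ∩ {y | y.1 n = a}) + μ.real {y | N ≤ y.1 0} := by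
  have hcover : cylOf x n ⊆ (⋃ a ∈ Finset.range N, cylOf x n ∩ {y | y.1 n = a}) ∪
      shift^[n] ⁻¹' {y | N ≤ y.1 0} := fun y hy => by
    rcases lt_or_ge (y.1 n) N with hn | hn
    · exact .inl (Set.mem_biUnion (Finset.mem_coe.2 (Finset.mem_range.2 hn)) ⟨hy, rfl⟩)
    · exact .inr (hn.trans_eq (shift_iterate_coord n y 0).symm)
  have hN : MeasurableSet {y : MarkovShift A | N ≤ y.1 0} :=
    (isClopen_coord_mem 0 (Set.Ici N)).isOpen.measurableSet
  rw [← (hμ.iterate n).measureReal_preimage hN.nullMeasurableSet]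
  exact (measureReal_mono hcover).trans ((measureReal_union_le _ _).trans
    (add_le_add_left (measureReal_biUnion_finset_le _ _) _))

section CylinderRate

variable {ι : Type*} {l : Filter ι} {β : ι → ℝ} {m : ι → Measure (MarkovShift A)}
  {L : List ℕ → ℝ}

/-- The measures `m i` of every cylinder `[w]` decay like `e^{β i · L w}` along `l`. -/
def IsCylinderRate (m : ι → Measure (MarkovShift A)) (β : ι → ℝ) (l : Filter ι)
    (L : List ℕ → ℝ) : Prop :=
  ∀ w, Tendsto (fun i => 1 / β i * Real.log (m i (cylinder w)).toReal) l (𝓝 (L w))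

namespace IsCylinderRate

theorem tendsto_log_cylOf (hL : IsCylinderRate m β l L) (x : MarkovShift A) (n : ℕ) :
    Tendsto (fun i => 1 / β i * Real.log ((m i).real (cylOf x n))) l (𝓝 (L (word x n))) := by
  rw [← cylinder_word]
  exact hL _

variable [∀ i, IsProbabilityMeasure (m i)]

theorem measureReal_cylOf_pos (hpos : ∀ i x n, m i (cylOf x n) ≠ 0) (i : ι)
    (x : MarkovShift A) (n : ℕ) : 0 < (m i).real (cylOf x n) :=
  ENNReal.toReal_pos (hpos i x n) (measure_ne_top _ _)

theorem le_of_measure_le [l.NeBot] (hL : IsCylinderRate m β l L) (hβ : Tendsto β l atTop)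
    (hpos : ∀ i x n, m i (cylOf x n) ≠ 0) {x y : MarkovShift A} {n k : ℕ}
    (hle : ∀ i, m i (cylOf x n) ≤ m i (cylOf y k)) : L (word x n) ≤ L (word y k) := by
  refine le_of_tendsto_of_tendsto (hL.tendsto_log_cylOf x n) (hL.tendsto_log_cylOf y k) ?_
  filter_upwards [hβ.eventually_gt_atTop 0] with i hβi
  exact mul_le_mul_of_nonneg_left (Real.log_le_log (measureReal_cylOf_pos hpos i x n)
    (ENNReal.toReal_mono (measure_ne_top _ _) (hle i))) (one_div_pos.2 hβi).le

theorem antitone_word [l.NeBot] (hL : IsCylinderRate m β l L) (hβ : Tendsto β l atTop)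
    (hpos : ∀ i x n, m i (cylOf x n) ≠ 0) (x : MarkovShift A) :
    Antitone fun n => L (word x n) :=
  fun _ _ hnk => hL.le_of_measure_le hβ hpos fun _ => measure_mono (cylOf_antitone x hnk)

theorem word_nonpos [l.NeBot] (hL : IsCylinderRate m β l L) (hβ : Tendsto β l atTop)
    (x : MarkovShift A) (n : ℕ) : L (word x n) ≤ 0 := by
  refine le_of_tendsto (hL.tendsto_log_cylOf x n) ?_
  filter_upwards [hβ.eventually_gt_atTop 0] with i hβi
  exact mul_nonpos_of_nonneg_of_nonpos (one_div_pos.2 hβi).le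
    (Real.log_nonpos measureReal_nonneg measureReal_le_one)

theorem word_succ_le_word_shift [l.NeBot] (hL : IsCylinderRate m β l L)
    (hβ : Tendsto β l atTop) (hpos : ∀ i x n, m i (cylOf x n) ≠ 0)
    (hinv : ∀ i, MeasurePreserving shift (m i) (m i)) (x : MarkovShift A) (n : ℕ) :
    L (word x (n + 1)) ≤ L (word (shift x) n) := by
  refine hL.le_of_measure_le hβ hpos fun i => ?_
  rw [← (hinv i).measure_preimage (measurableSet_cylOf (shift x) n).nullMeasurableSet]
  exact measure_mono fun y hy j hj => hy (j + 1) (Nat.succ_lt_succ hj)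

/-- Exponential tightness leaves finitely many candidates for the next symbol, up to a negligible
tail, and one of them must carry the full exponential rate. -/
theorem exists_mem_cylOf_word_le [l.NeBot] (hL : IsCylinderRate m β l L)
    (hβ : Tendsto β l atTop) (hpos : ∀ i x n, m i (cylOf x n) ≠ 0)
    (hinv : ∀ i, MeasurePreserving shift (m i) (m i)) (htight : IsExpTight m β l)
    (x : MarkovShift A) (n : ℕ) : ∃ y ∈ cylOf x n, L (word x n) ≤ L (word y (n + 1)) := by
  by_contra! hlt
  obtain ⟨T, hT, htail⟩ := htight
  set s := L (word x n) - 1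
  obtain ⟨N, hN⟩ := (hT.eventually_lt_const (pos_iff_ne_zero.2 (eexp_ne_zero s))).exists
  have hcard : (0 : ℝ) < N + 1 := N.cast_add_one_pos
  have hpos' (i : ι) := measureReal_cylOf_pos hpos i x n
  have hsymbol (a : ℕ) : ∀ᶠ i in l,
      (N + 1) * (m i).real (cylOf x n ∩ {y | y.1 n = a}) < (m i).real (cylOf x n) := by
    rcases (cylOf x n ∩ {y | y.1 n = a}).eq_empty_or_nonempty with h | ⟨y, hy, rfl⟩
    · exact Eventually.of_forall fun i => by simpa [h] using hpos' i
    · rw [cylOf_inter_coord_eq hy]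
      exact eventually_mul_lt_of_tendsto_log hβ hpos' hcard (hL.tendsto_log_cylOf x n)
        (hL.tendsto_log_cylOf y (n + 1)) (hlt y hy)
  have hrest : ∀ᶠ i in l, (N + 1) * Real.exp (β i * s) < (m i).real (cylOf x n) := by
    refine eventually_mul_lt_of_tendsto_log hβ hpos' hcard (hL.tendsto_log_cylOf x n)
      (tendsto_const_nhds.congr' ?_) (sub_one_lt _)
    filter_upwards [hβ.eventually_gt_atTop 0] with i hβi
    rw [Real.log_exp, one_div, inv_mul_cancel_left₀ hβi.ne']
  obtain ⟨i, hβi, htail, hrest, hsymbols⟩ := ((hβ.eventually_ge_atTop 0).and (htail.and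
    (hrest.and ((Finset.range N).eventually_all.2 fun a _ => hsymbol a)))).exists
  have htailReal : (m i).real {y | N ≤ y.1 0} ≤ Real.exp (β i * s) := by
    refine ENNReal.toReal_le_of_le_ofReal (Real.exp_pos _).le ((htail N).trans ?_)
    rw [← eexp_eq_ofReal, eexp_mul]
    exact ENNReal.rpow_le_rpow hN.le hβi
  have hsum := Finset.sum_le_card_nsmul _ _ _ fun a ha => (hsymbols a ha).le
  rw [← Finset.mul_sum, Finset.card_range, nsmul_eq_mul] at hsum
  have hcover := mul_le_mul_of_nonneg_left (measureReal_cylOf_le_sum (hinv i) x n N) hcard.le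
  have htailMass := mul_le_mul_of_nonneg_left htailReal hcard.le
  linarith

end IsCylinderRate

end CylinderRate

/-! ### The deviation function -/

/-- The deviation function `Ĩ(x) = -lim_n L(x₀ ⋯ x_{n-1})`, as a supremum because `L` decreases
along the prefixes of `x`. -/
noncomputable def rateFunction (L : List ℕ → ℝ) (x : MarkovShift A) : EReal :=
  ⨆ n, ((-(L (word x n)) : ℝ) : EReal)

section RateFunction

variable {L : List ℕ → ℝ}

theorem neg_word_le_rateFunction (L : List ℕ → ℝ) (x : MarkovShift A) (n : ℕ) :
    ((-(L (word x n)) : ℝ) : EReal) ≤ rateFunction L x :=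
  le_iSup (fun n => ((-(L (word x n)) : ℝ) : EReal)) n

theorem rateFunction_nonneg {x : MarkovShift A} {n : ℕ} (hL : L (word x n) ≤ 0) :
    0 ≤ rateFunction L x :=
  (EReal.coe_nonneg.2 (neg_nonneg.2 hL)).trans (neg_word_le_rateFunction L x n)

theorem tendsto_rateFunction {x : MarkovShift A} (hL : Antitone fun n => L (word x n)) :
    Tendsto (fun n => ((-(L (word x (n + 1))) : ℝ) : EReal)) atTop (𝓝 (rateFunction L x)) :=
  (tendsto_add_atTop_iff_nat 1).2 (tendsto_atTop_iSup fun _ _ hnk =>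
    EReal.coe_le_coe_iff.2 (neg_le_neg (hL hnk)))

theorem lowerSemicontinuous_rateFunction (L : List ℕ → ℝ) :
    LowerSemicontinuous (rateFunction L : MarkovShift A → EReal) := by
  refine lowerSemicontinuous_iSup fun n => Continuous.lowerSemicontinuous ?_
  have hcoords : Continuous (coords n : MarkovShift A → Fin n → ℕ) :=
    continuous_pi fun i => continuous_coord i
  exact (continuous_of_discreteTopology
    (f := fun c : Fin n → ℕ => ((-(L (List.ofFn c)) : ℝ) : EReal))).comp hcoords

theorem rateFunction_shift_le {x : MarkovShift A}
    (hshift : ∀ n, L (word x (n + 1)) ≤ L (word (shift x) n)) :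
    rateFunction L (shift x) ≤ rateFunction L x :=
  iSup_le fun n => (EReal.coe_le_coe_iff.2 (neg_le_neg (hshift n))).trans
    (neg_word_le_rateFunction L x (n + 1))

theorem exists_mem_cylOf_forall_word_le
    (hanti : ∀ x : MarkovShift A, Antitone fun n => L (word x n))
    (hstep : ∀ (x : MarkovShift A) (n), ∃ y ∈ cylOf x n, L (word x n) ≤ L (word y (n + 1)))
    (x : MarkovShift A) (n : ℕ) : ∃ z ∈ cylOf x n, ∀ j, L (word x n) ≤ L (word z j) := by
  choose next hnext hle using hstep
  let path : ℕ → MarkovShift A := fun j => Nat.rec x (fun j y => next y (n + j)) j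
  have hpath (j : ℕ) : L (word x n) ≤ L (word (path j) (n + j)) := by
    induction j with
    | zero => exact le_rfl
    | succ j ih => exact ih.trans (hle (path j) (n + j))
  obtain ⟨z, hz⟩ := exists_forall_mem_cylOf fun j => hnext (path j) (n + j)
  refine ⟨z, hz 0, fun j => ?_⟩
  calc L (word x n) ≤ L (word (path j) (n + j)) := hpath j
    _ = L (word z (n + j)) := by rw [word_eq_of_mem_cylOf (hz j)]
    _ ≤ L (word z j) := hanti z (Nat.le_add_left j n)

theorem iInf_rateFunction_cylOf (hanti : ∀ x : MarkovShift A, Antitone fun n => L (word x n))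
    (hstep : ∀ (x : MarkovShift A) (n), ∃ y ∈ cylOf x n, L (word x n) ≤ L (word y (n + 1)))
    (x : MarkovShift A) (n : ℕ) :
    ⨅ y ∈ cylOf x n, rateFunction L y = ((-(L (word x n)) : ℝ) : EReal) := by
  refine le_antisymm ?_ (le_iInf₂ fun y hy => ?_)
  · obtain ⟨z, hz, hle⟩ := exists_mem_cylOf_forall_word_le hanti hstep x n
    exact (iInf₂_le z hz).trans
      (iSup_le fun j => EReal.coe_le_coe_iff.2 (neg_le_neg (hle j)))
  · rw [← word_eq_of_mem_cylOf hy]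
    exact neg_word_le_rateFunction L y n

theorem coe_eq_neg_iInf_rateFunction
    (hanti : ∀ x : MarkovShift A, Antitone fun n => L (word x n))
    (hstep : ∀ (x : MarkovShift A) (n), ∃ y ∈ cylOf x n, L (word x n) ≤ L (word y (n + 1)))
    {w : List ℕ} (hw : (cylinder (A := A) w).Nonempty) :
    ((L w : ℝ) : EReal) = -⨅ x ∈ cylinder (A := A) w, rateFunction L x := by
  obtain ⟨x, hx⟩ := hw
  rw [cylinder_eq_cylOf hx, iInf_rateFunction_cylOf hanti hstep, word_length_of_mem_cylinder hx,
    EReal.coe_neg, neg_neg]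

theorem exists_tendsto_rateFunction_shift_iterate
    (hshift : ∀ x : MarkovShift A, rateFunction L (shift x) ≤ rateFunction L x)
    (x : MarkovShift A) :
    ∃ c, Tendsto (fun n => rateFunction L (shift^[n] x)) atTop (𝓝 c) := by
  refine ⟨_, tendsto_atTop_iInf (antitone_nat_of_succ_le fun n => ?_)⟩
  rw [Function.iterate_succ_apply']
  exact hshift _

end RateFunction

theorem gibbs_const_mul_cylOf_ne_zero (hA : FinitelyPrimitive A) {f : MarkovShift A → ℝ}
    (hf : Continuous f) {D : ℝ} (hD : HasDistortionBound f D) {β p : ℝ} {h : MarkovShift A → ℝ}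
    {ν : Measure (MarkovShift A)} (hRPF : IsRPF (fun x => β * f x) p h ν) (x : MarkovShift A)
    (n : ℕ) : gibbs h ν (cylOf x n) ≠ 0 := by
  obtain ⟨k, F, hF⟩ := hA.exists_connectsThrough_succ
  obtain ⟨C, hC⟩ := (hD.const_mul β).exists_neg_le_on_finset F
  exact hRPF.gibbs_cylOf_ne_zero (continuous_const.mul hf) (hD.const_mul β) hF hC x n

theorem deviation_function_along_subsequence_general (hA : FinitelyPrimitive A)
    {f : MarkovShift A → ℝ} (hWalters : SatisfiesWalters f) (hVar1 : Var1Finite f)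
    {ι : Type*} {l : Filter ι} [l.NeBot] {β : ι → ℝ} (hβ : Tendsto β l atTop) {p : ι → ℝ}
    {h : ι → MarkovShift A → ℝ} {ν : ι → Measure (MarkovShift A)}
    (hRPF : ∀ i, IsRPF (fun x => β i * f x) (p i) (h i) (ν i)) {L : List ℕ → ℝ}
    (hL : IsCylinderRate (fun i => gibbs (h i) (ν i)) β l L) :
    ∃ Itilde : MarkovShift A → EReal,
      (∀ x, Tendsto (fun n => ((-(L (word x (n + 1))) : ℝ) : EReal)) atTop (𝓝 (Itilde x))) ∧
        (∀ x, 0 ≤ Itilde x) ∧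
        LowerSemicontinuous Itilde ∧
        (∀ w : List ℕ, (cylinder (A := A) w).Nonempty →
          ((L w : ℝ) : EReal) = -⨅ x ∈ cylinder (A := A) w, Itilde x) ∧
        (∀ x, Itilde (shift x) ≤ Itilde x) ∧
        ∀ x, ∃ c, Tendsto (fun n => Itilde (shift^[n] x)) atTop (𝓝 c) := by
  have hf := hWalters.continuous
  obtain ⟨D, hD⟩ := hWalters.exists_hasDistortionBound hVar1
  have (i : ι) : IsProbabilityMeasure (gibbs (h i) (ν i)) := (hRPF i).isProbabilityMeasure_gibbs
  have hinv (i : ι) : MeasurePreserving shift (gibbs (h i) (ν i)) (gibbs (h i) (ν i)) :=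
    (hRPF i).measurePreserving_shift_gibbs (continuous_const.mul hf) (hD.const_mul (β i))
  have hpos (i : ι) := gibbs_const_mul_cylOf_ne_zero hA hf hD (hRPF i)
  have hanti := hL.antitone_word hβ hpos
  have hstep := hL.exists_mem_cylOf_word_le hβ hpos hinv (isExpTight_gibbs hA hf hD hβ hRPF)
  have hshift (x : MarkovShift A) : rateFunction L (shift x) ≤ rateFunction L x :=
    rateFunction_shift_le (hL.word_succ_le_word_shift hβ hpos hinv x)
  exact ⟨rateFunction L, fun x => tendsto_rateFunction (hanti x),
    fun x => rateFunction_nonneg (hL.word_nonpos hβ x 0), lowerSemicontinuous_rateFunction L,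
    fun w hw => coe_eq_neg_iInf_rateFunction hanti hstep hw, hshift,
    exists_tendsto_rateFunction_shift_iterate hshift⟩

end Development

/-- If `(1/β_i) log μ_{β_i}(C)` converges for every cylinder `C` (to `L(C)`), then the
function `Ĩ(x) = -lim_n lim_i (1/β_i) log μ_{β_i}([x₀ … x_n])` is well defined,
nonnegative and lower semi-continuous; for every nonempty cylinder `C` the limit equals
`-inf_{x ∈ C} Ĩ(x)`; and `Ĩ ≥ Ĩ∘σ`, so that `Ĩ₀(x) = lim_n Ĩ(σⁿ x)` exists. -/
theorem deviation_function_along_subsequence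
    (A : ℕ → ℕ → Bool)
    (hmix : TopologicallyMixing A)
    (hbip : FinitelyPrimitive A)
    (f : MarkovShift A → ℝ)
    (hWalters : SatisfiesWalters f)
    (hVar1 : Var1Finite f)
    (P : ℝ → ℝ)
    (hPfin : HasGurevichPressure f (P 1))
    (μmax : Measure (MarkovShift A))
    (hmax : IsMaximizing f μmax)
    (huniq : ∀ ν', IsMaximizing f ν' → ν' = μmax)
    (h : ℝ → MarkovShift A → ℝ)
    (ν : ℝ → Measure (MarkovShift A))
    (hRPF : ∀ β : ℝ, 1 < β → IsRPF (fun x => β * f x) (P β) (h β) (ν β))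
    (βs : ℕ → ℝ) (hβs : ∀ i, 1 < βs i) (hβtop : Tendsto βs atTop atTop)
    (L : List ℕ → ℝ)
    (hL : ∀ w : List ℕ, Tendsto
      (fun i => (1 / βs i) * Real.log (((gibbs (h (βs i)) (ν (βs i))) (cylinder w)).toReal))
      atTop (𝓝 (L w))) :
    ∃ Itilde : MarkovShift A → EReal,
      (∀ x : MarkovShift A, Tendsto
          (fun n : ℕ => ((-(L (List.ofFn fun i : Fin (n + 1) => x.1 i)) : ℝ) : EReal))
          atTop (𝓝 (Itilde x))) ∧
        (∀ x, 0 ≤ Itilde x) ∧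
        LowerSemicontinuous Itilde ∧
        (∀ w : List ℕ, (cylinder (A := A) w).Nonempty →
          ((L w : ℝ) : EReal) = - ⨅ x ∈ cylinder (A := A) w, Itilde x) ∧
        (∀ x : MarkovShift A, Itilde (shift x) ≤ Itilde x) ∧
        (∀ x : MarkovShift A, ∃ l : EReal,
          Tendsto (fun n : ℕ => Itilde (shift^[n] x)) atTop (𝓝 l)) :=
  deviation_function_along_subsequence_general hbip hWalters hVar1 hβtop
    (fun i => hRPF (βs i) (hβs i)) hL

end MarkovShift
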